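/- arXiv:math/0203180 — 2 statements merged into one kernel-verified Lean document; each statement's English description precedes it below -/
import Mathlib

section
/- Assume k has characteristic 0. Let p_1, …, p_t ∈ k^× generate a free abelian subgroup of k^× of rank t, and let a_0, …, a_t ∈ k, not all zero. Then the following are equivalent: (i) a_i ≠ 0 for every 0 ≤ i ≤ t; (ii) for every nonzero homogeneous polynomial F ∈ k[x_0,…,x_t], the set {n ∈ ℤ : F(a_0, a_1 p_1^n, …, a_t p_t^n) = 0} is finite (i.e. the orbit of the point (a_0 : ⋯ : a_t) under the automorphism diag(1, p_1, …, p_t) of P^t is critically dense). -/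
set_option synthInstance.maxHeartbeats 1000000
set_option maxHeartbeats 4000000

noncomputable section

/-!
On the orbit a form `F` becomes an exponential sum `n ↦ ∑ c_m l_m ^ n` whose bases `l_m` are the
dehomogenized monomials of `F` evaluated at `p`. Homogeneity makes these monomials distinct, and
since the `p_i` are multiplicatively independent no ratio of two bases is a root of unity. It
remains to see that such a sum with infinitely many zeros has vanishing coefficients, which is the
Skolem–Mahler–Lech method. Following Lech, the coefficients and bases are moved into the algebraic
closure of some `ℚ_p` with all bases units: Noether normalization presents the finitely generated
`ℚ`-algebra they generate as integral over a polynomial ring, whose variables go to algebraically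
independent `p`-adic integers, `p` avoiding the finitely many denominators of the integral
equations. A common power of the bases is then a family of exponentials, so along an arithmetic
progression the sum is an analytic function of a `p`-adic variable. Its zeros accumulate in the
compact unit ball, so it vanishes near a point, hence on a whole progression of exponents, and
linear independence of characters kills the coefficients.
-/

open Filter Topology NormedSpace

/-! ### The non-archimedean exponential -/

theorem norm_inv_factorial_padic_le (p : ℕ) [Fact p.Prime] (n : ℕ) :
    ‖(n.factorial : ℚ_[p])⁻¹‖ ≤ (p : ℝ) ^ n := by
  have hp : (1 : ℝ) ≤ p := by exact_mod_cast (Fact.out : p.Prime).one_le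
  have hn : (n.factorial : ℚ_[p]) ≠ 0 := by exact_mod_cast n.factorial_ne_zero
  rw [norm_inv, Padic.norm_eq_zpow_neg_valuation hn, Padic.valuation_natCast, ← zpow_neg, neg_neg,
    zpow_natCast]
  exact pow_le_pow_right₀ hp (padicValNat_factorial_le (p := p) n)

theorem radius_expSeries_pos_of_padic (p : ℕ) [Fact p.Prime] (E : Type*)
    [NontriviallyNormedField E] [NormedAlgebra ℚ_[p] E] : 0 < (expSeries E E).radius := by
  have hp : (0 : ℝ) < p := by exact_mod_cast (Fact.out : p.Prime).pos
  refine lt_of_lt_of_le (b := (((p : NNReal)⁻¹ : NNReal) : ENNReal)) (by simp)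
    (FormalMultilinearSeries.le_radius_of_bound _ 1 fun n => ?_)
  have hnorm : ‖expSeries E E n‖ ≤ (p : ℝ) ^ n := by
    rw [expSeries, norm_smul, ContinuousMultilinearMap.norm_mkPiAlgebraFin, mul_one]
    simpa only [map_inv₀, map_natCast] using
      (norm_algebraMap' E ((n.factorial : ℚ_[p])⁻¹)).trans_le (norm_inv_factorial_padic_le p n)
  calc ‖expSeries E E n‖ * ((p : NNReal)⁻¹ : NNReal) ^ n
      ≤ (p : ℝ) ^ n * ((p : NNReal)⁻¹ : NNReal) ^ n := by gcongr
    _ = 1 := by rw [← mul_pow]; simp [hp.ne']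

theorem mul_mem_eball_zero {E : Type*} [SeminormedRing E] {x z : E} {r : ENNReal} (hz : ‖z‖ ≤ 1)
    (hx : x ∈ Metric.eball (0 : E) r) : z * x ∈ Metric.eball (0 : E) r := by
  rw [Metric.mem_eball, edist_zero_right] at hx ⊢
  have hzx : ‖z * x‖ ≤ ‖x‖ :=
    (norm_mul_le z x).trans (mul_le_of_le_one_left (norm_nonneg x) hz)
  exact (enorm_le_iff_norm_le.2 hzx).trans_lt hx

section

variable {E : Type*} [NontriviallyNormedField E]

theorem image_exp_eball_mem_nhds_one [CompleteSpace E] [CharZero E]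
    (hr : 0 < (expSeries E E).radius) :
    exp '' Metric.eball (0 : E) (expSeries E E).radius ∈ 𝓝 (1 : E) := by
  have h := (hasStrictDerivAt_exp_zero_of_radius_pos hr).map_nhds_eq one_ne_zero
  rw [exp_zero] at h
  rw [← h]
  exact image_mem_map (Metric.eball_mem_nhds _ hr)

variable [CharZero E] [IsUltrametricDist E]

theorem exp_natCast_mul_of_mem_eball [CompleteSpace E] {x : E}
    (hx : x ∈ Metric.eball (0 : E) (expSeries E E).radius) (n : ℕ) : exp (n * x) = exp x ^ n := by
  induction n with
  | zero => simp
  | succ n ih =>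
    have hnx := mul_mem_eball_zero (IsUltrametricDist.norm_natCast_le_one E n) hx
    rw [Nat.cast_succ, add_one_mul, exp_add_of_mem_ball hnx hx, ih, pow_succ]

theorem exp_intCast_mul_of_mem_eball [CompleteSpace E] {x : E}
    (hx : x ∈ Metric.eball (0 : E) (expSeries E E).radius) (n : ℤ) : exp (n * x) = exp x ^ n := by
  obtain ⟨m, rfl | rfl⟩ := n.eq_nat_or_neg
  · simpa using exp_natCast_mul_of_mem_eball hx m
  · have hmx := mul_mem_eball_zero (IsUltrametricDist.norm_natCast_le_one E m) hx
    rw [zpow_neg, zpow_natCast, ← exp_natCast_mul_of_mem_eball hx, Int.cast_neg,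
      Int.cast_natCast, neg_mul, exp_neg_of_mem_ball E hmx]

theorem exists_forall_intCast_eq_zero_of_infinite [ProperSpace E] {p : ℕ} (hp0 : 0 < p)
    (hp : ‖(p : E)‖ < 1) {f : E → E}
    (hf : ∀ z, ‖z‖ ≤ 1 → AnalyticAt E f z) (hinf : {n : ℤ | f n = 0}.Infinite) :
    ∃ r : ℤ, ∃ N : ℕ, 0 < N ∧ ∀ m : ℤ, f (r + N * m : ℤ) = 0 := by
  have hint (n : ℤ) : ‖(n : E)‖ ≤ 1 := IsUltrametricDist.norm_intCast_le_one E n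
  obtain ⟨w, hw, hacc⟩ := (hinf.image (f := ((↑) : ℤ → E))
    Int.cast_injective.injOn).exists_accPt_of_subset_isCompact (isCompact_closedBall 0 1) (by
      rintro _ ⟨n, -, rfl⟩
      simpa using hint n)
  rw [mem_closedBall_zero_iff] at hw
  rw [accPt_iff_frequently_nhdsNE] at hacc
  have hzero : ∀ᶠ z in 𝓝 w, f z = 0 := by
    refine (hf w hw).frequently_zero_iff_eventually_zero.1 (hacc.mono ?_)
    rintro _ ⟨n, hn, rfl⟩
    exact hn
  obtain ⟨ε, hε, hball⟩ := Metric.eventually_nhds_iff.1 hzero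
  obtain ⟨_, ⟨r, -, rfl⟩, hrw⟩ := ((hacc.filter_mono nhdsWithin_le_nhds).and_eventually
    (Metric.ball_mem_nhds w (half_pos hε))).exists
  obtain ⟨s, hs⟩ := exists_pow_lt_of_lt_one (half_pos hε) hp
  refine ⟨r, p ^ s, pow_pos hp0 s, fun m => hball ?_⟩
  calc dist ((r + (p ^ s : ℕ) * m : ℤ) : E) w
      ≤ dist ((r + (p ^ s : ℕ) * m : ℤ) : E) r + dist (r : E) w := dist_triangle _ _ _
    _ ≤ ‖(p : E)‖ ^ s + dist (r : E) w := by
        gcongr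
        rw [dist_eq_norm, Int.cast_add, Int.cast_mul, Int.cast_natCast, add_sub_cancel_left,
          norm_mul, Nat.cast_pow, norm_pow]
        exact mul_le_of_le_one_right (by positivity) (hint m)
    _ < ε / 2 + ε / 2 := add_lt_add hs hrw
    _ = ε := add_halves ε

end

theorem exists_pow_mem_of_norm_eq_one {ι E : Type*} [NormedField E] [ProperSpace E] [Finite ι]
    {l : ι → E} (hl : ∀ j, ‖l j‖ = 1) {U : Set E} (hU : U ∈ 𝓝 1) :
    ∃ N : ℕ, 0 < N ∧ ∀ j, l j ^ N ∈ U := by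
  let x : ι → Metric.sphere (0 : E) 1 := fun j => ⟨l j, by simpa using hl j⟩
  have hV : {y : ι → Metric.sphere (0 : E) 1 | ∀ j, (y j : E) ∈ U} ∈ 𝓝 1 := by
    simp only [Set.ofPred_forall]
    refine Filter.iInter_mem.2 fun j => ?_
    have : Continuous fun y : ι → Metric.sphere (0 : E) 1 => (y j : E) := by fun_prop
    exact this.continuousAt.preimage_mem_nhds (by simpa using hU)
  have hfreq := (mapClusterPt_one_atTop_pow x).frequently hV
  obtain ⟨N, hN, hN0⟩ := (hfreq.and_eventually (eventually_gt_atTop 0)).exists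
  exact ⟨N, hN0, fun j => by simpa [x] using hN j⟩

theorem exists_infinite_setOf_add_mul_mem {s : Set ℤ} (hs : s.Infinite) {M : ℕ} (hM : 0 < M) :
    ∃ r : ℤ, {m : ℤ | r + M * m ∈ s}.Infinite := by
  by_contra! hfin
  have hM' : (0 : ℤ) < M := by exact_mod_cast hM
  refine hs (((Set.finite_Ico (0 : ℤ) M).biUnion fun r _ =>
    (hfin r).image fun m => r + M * m).subset fun n hn => ?_)
  refine Set.mem_biUnion (x := n % M) ⟨n.emod_nonneg hM'.ne', n.emod_lt_of_pos hM'⟩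
    ⟨n / M, ?_, n.emod_add_mul_ediv M⟩
  simpa only [Set.mem_ofPred_eq, Int.emod_add_mul_ediv] using hn

/-! ### Non-degenerate exponential sums over `p`-adic fields -/

/-- Non-degeneracy of the family `l` of bases of the exponential sums `∑ j, c j * l j ^ n`: for
invertible `l j`, no ratio of two distinct members is a root of unity. It is phrased through powers
so that it makes sense in any monoid and says that the sum keeps distinct bases along every
arithmetic progression of exponents. -/
def NondegenerateBases {ι M : Type*} [Monoid M] (l : ι → M) : Prop :=
  ∀ N : ℕ, 0 < N → Function.Injective fun j => l j ^ N

theorem coeff_eq_zero_of_forall_sum_mul_pow_eq_zero {ι R : Type*} [Fintype ι] [CommRing R]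
    [IsDomain R] {c l : ι → R} (hl : Function.Injective l)
    (hzero : ∀ m : ℕ, ∑ j, c j * l j ^ m = 0) (j : ι) : c j = 0 := by
  have hinj : Function.Injective fun j => powersHom R (l j) :=
    (powersHom R).injective.comp hl
  refine Fintype.linearIndependent_iff.1
    ((linearIndependent_monoidHom (Multiplicative ℕ) R).comp _ hinj) c ?_ j
  ext m
  simpa using hzero m.toAdd

theorem coeff_eq_zero_of_infinite_zeros_of_properSpace {ι E : Type*} [Fintype ι]
    [NontriviallyNormedField E] [CharZero E] [IsUltrametricDist E] [ProperSpace E]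
    (hr : 0 < (expSeries E E).radius) {p : ℕ} (hp0 : 0 < p) (hp : ‖(p : E)‖ < 1)
    {c l : ι → E} (hl : ∀ j, ‖l j‖ = 1) (hnd : NondegenerateBases l)
    (hinf : {n : ℤ | ∑ j, c j * l j ^ n = 0}.Infinite) (j : ι) : c j = 0 := by
  have hl0 (j : ι) : l j ≠ 0 := norm_ne_zero_iff.1 (by simp [hl j])
  obtain ⟨M, hM, hlog⟩ := exists_pow_mem_of_norm_eq_one hl (image_exp_eball_mem_nhds_one hr)
  choose x hx hexp using hlog
  obtain ⟨r, hrinf⟩ := exists_infinite_setOf_add_mul_mem hinf hM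
  let f : E → E := fun z => ∑ j, c j * l j ^ r * exp (z * x j)
  have hf (m : ℤ) : f m = ∑ j, c j * l j ^ (r + M * m) := by
    refine Finset.sum_congr rfl fun j _ => ?_
    rw [exp_intCast_mul_of_mem_eball (hx j), hexp, zpow_add₀ (hl0 j), zpow_mul, zpow_natCast,
      mul_assoc]
  have hfan (z : E) (hz : ‖z‖ ≤ 1) : AnalyticAt E f z := by
    refine Finset.analyticAt_fun_sum _ fun j _ => analyticAt_const.mul ?_
    exact (analyticAt_exp_of_mem_ball _ (mul_mem_eball_zero hz (hx j))).comp_of_eq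
      (analyticAt_id.mul analyticAt_const) rfl
  obtain ⟨s, N, hN, hzero⟩ := exists_forall_intCast_eq_zero_of_infinite hp0 hp hfan
    (by simpa only [hf, Set.mem_ofPred_eq] using hrinf)
  have hprogression (m : ℕ) : ∑ j, c j * l j ^ (r + M * s) * (l j ^ (M * N)) ^ m = 0 := by
    rw [← hzero m, hf]
    refine Finset.sum_congr rfl fun j _ => ?_
    rw [mul_assoc, ← pow_mul, ← zpow_natCast, ← zpow_add₀ (hl0 j)]
    push_cast
    ring_nf
  exact (mul_eq_zero.1 (coeff_eq_zero_of_forall_sum_mul_pow_eq_zero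
    (hnd (M * N) (Nat.mul_pos hM hN)) hprogression j)).resolve_right (zpow_ne_zero _ (hl0 j))

theorem coeff_eq_zero_of_infinite_zeros_of_padic {p : ℕ} [Fact p.Prime] {ι L : Type*} [Fintype ι]
    [NormedField L] [NormedAlgebra ℚ_[p] L] [Algebra.IsAlgebraic ℚ_[p] L] [IsUltrametricDist L]
    {c l : ι → L} (hl : ∀ j, ‖l j‖ = 1) (hnd : NondegenerateBases l)
    (hinf : {n : ℤ | ∑ j, c j * l j ^ n = 0}.Infinite) (j : ι) : c j = 0 := by
  let E := IntermediateField.adjoin ℚ_[p] (Set.range c ∪ Set.range l)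
  have hcE (j : ι) : c j ∈ E := IntermediateField.subset_adjoin _ _ (Or.inl ⟨j, rfl⟩)
  have hlE (j : ι) : l j ∈ E := IntermediateField.subset_adjoin _ _ (Or.inr ⟨j, rfl⟩)
  have hfin : FiniteDimensional ℚ_[p] E := IntermediateField.finiteDimensional_adjoin
    fun x _ => Algebra.IsIntegral.isIntegral x
  have hproper : ProperSpace E := FiniteDimensional.proper ℚ_[p] E
  have hchar : CharZero E := charZero_of_injective_algebraMap (algebraMap ℚ_[p] E).injective
  have hp : ‖(p : E)‖ < 1 := by
    rw [← map_natCast (algebraMap ℚ_[p] E), norm_algebraMap']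
    exact Padic.norm_p_lt_one
  have hc := coeff_eq_zero_of_infinite_zeros_of_properSpace (radius_expSeries_pos_of_padic p E)
    (Fact.out : p.Prime).pos hp (c := fun j => ⟨c j, hcE j⟩) (l := fun j => ⟨l j, hlE j⟩) hl
    (fun N hN i j h => hnd N hN (congrArg (algebraMap E L) h)) (hinf.mono fun n hn => ?_) j
  · exact congrArg Subtype.val hc
  · rw [Set.mem_ofPred_eq] at hn ⊢
    apply (algebraMap E L).injective
    simpa only [map_sum, map_mul, map_zpow₀, map_zero, IntermediateField.algebraMap_apply]
      using hn

/-! ### Embedding finitely generated algebras into `p`-adic fields -/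

theorem countable_adjoin {R A : Type*} [CommSemiring R] [Countable R] [Semiring A]
    [Algebra R A] {s : Set A} (hs : s.Countable) : Countable (Algebra.adjoin R s) := by
  rw [← Cardinal.mk_le_aleph0_iff, ← Cardinal.lift_le_aleph0]
  refine (Algebra.lift_cardinalMk_adjoin_le R s).trans ?_
  simpa using hs

theorem exists_algebraicIndependent_of_uncountable (ι R A : Type*) [Countable ι] [CommRing R]
    [Countable R] [CommRing A] [IsDomain A] [Algebra R A] [FaithfulSMul R A] [Uncountable A] :
    ∃ x : ι → A, AlgebraicIndependent R x := by
  have : Nontrivial R := (algebraMap R A).domain_nontrivial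
  obtain ⟨s, hs⟩ := exists_isTranscendenceBasis R A
  have hsu : ¬ s.Countable := by
    intro hsc
    have := countable_adjoin (R := R) hsc
    have := hs.isAlgebraic
    rw [Subtype.range_coe] at this
    have h := Algebraic.countable (Algebra.adjoin R s) A
    simp [Algebra.IsAlgebraic.isAlgebraic, Set.countable_univ_iff] at h
  have : Infinite s := Set.infinite_coe_iff.2 fun h => hsu h.countable
  obtain ⟨f, hf⟩ := exists_injective_nat ι
  exact ⟨_, hs.1.comp _ ((Infinite.natEmbedding s).injective.comp hf)⟩

theorem uncountable_padicInt (p : ℕ) [Fact p.Prime] : Uncountable ℤ_[p] := by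
  rw [← Cardinal.aleph0_lt_mk_iff]
  have hball : (Metric.closedBall (0 : ℚ_[p]) 1).Nonempty := ⟨0, by simp⟩
  have hcard := continuum_le_cardinal_of_isOpen ℚ_[p]
    (IsUltrametricDist.isOpen_closedBall (0 : ℚ_[p]) one_ne_zero) hball
  refine Cardinal.aleph0_lt_continuum.trans_le (hcard.trans ?_)
  exact Cardinal.mk_le_of_injective (f := fun x => ⟨x, mem_closedBall_zero_iff.1 x.2⟩)
    fun x y h => Subtype.ext (congrArg (fun z : ℤ_[p] => (z : ℚ_[p])) h)

theorem exists_algebraicIndependent_rat_padicInt (ι : Type*) [Countable ι] (p : ℕ)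
    [Fact p.Prime] :
    ∃ x : ι → ℤ_[p], AlgebraicIndependent ℚ fun i => (x i : ℚ_[p]) := by
  have := uncountable_padicInt p
  obtain ⟨x, hx⟩ := exists_algebraicIndependent_of_uncountable ι ℤ ℤ_[p]
  have hxℤ : AlgebraicIndependent ℤ fun i => (x i : ℚ_[p]) :=
    hx.map' (f := IsScalarTower.toAlgHom ℤ ℤ_[p] ℚ_[p]) (IsFractionRing.injective _ _)
  have := IsLocalization.isAlgebraic ℚ (nonZeroDivisors ℤ)
  exact ⟨x, hxℤ.extendScalars ℚ⟩

section

variable {M : Type*} [NormedField M] [IsUltrametricDist M]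

theorem norm_eval₂_le_one {σ R : Type*} [CommRing R] {f : R →+* M} {x : σ → M}
    (hx : ∀ i, ‖x i‖ ≤ 1) {P : MvPolynomial σ R} (hP : ∀ m, ‖f (P.coeff m)‖ ≤ 1) :
    ‖P.eval₂ f x‖ ≤ 1 :=
  MvPolynomial.eval₂_mem (s := (NormedField.valuation (K := M)).integer) (fun m _ => hP m) hx

theorem norm_le_one_of_eval₂_eq_zero {R : Type*} [CommRing R] {f : R →+* M} {P : Polynomial R}
    (hP : P.Monic) (hcoeff : ∀ n, ‖f (P.coeff n)‖ ≤ 1) {y : M} (hy : P.eval₂ f y = 0) :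
    ‖y‖ ≤ 1 := by
  let O := (NormedField.valuation (K := M)).integer
  have hmem : (↑(P.map f).coeffs : Set M) ⊆ O := fun z hz => by
    obtain ⟨n, -, rfl⟩ := Polynomial.mem_coeffs_iff.1 hz
    rw [Polynomial.coeff_map]
    exact hcoeff n
  have hint : IsIntegral O y := by
    refine ⟨(P.map f).toSubring O hmem, (Polynomial.monic_toSubring _ _ _).2 (hP.map f), ?_⟩
    change Polynomial.eval₂ O.subtype y _ = 0
    rw [← Polynomial.eval_map, Polynomial.map_toSubring,
      Polynomial.eval_map, hy]
  exact (Valuation.integer.integers _).mem_of_integral hint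

end

theorem exists_injective_comp_eq_of_isIntegral {R A M : Type*} [CommRing R] [CommRing A]
    [IsDomain A] [Field M] [IsAlgClosed M] {g : R →+* A} (hg : Function.Injective g)
    (hgint : g.IsIntegral) {f : R →+* M} (hf : Function.Injective f) :
    ∃ φ : A →+* M, Function.Injective φ ∧ φ.comp g = f := by
  algebraize [g, f]
  have := hg.isDomain g
  have : Module.IsTorsionFree R A := Module.isTorsionFree_iff_algebraMap_injective.2 hg
  have : Module.IsTorsionFree R M := Module.isTorsionFree_iff_algebraMap_injective.2 hf
  let φ : A →ₐ[R] M := IsAlgClosed.lift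
  refine ⟨φ, ?_, φ.comp_algebraMap⟩
  rw [RingHom.injective_iff_ker_eq_bot]
  refine Ideal.eq_bot_of_comap_eq_bot (R := R) ?_
  rw [RingHom.comap_ker, ← RingHom.injective_iff_ker_eq_bot]
  convert hf
  exact φ.comp_algebraMap

theorem exists_prime_forall_norm_rat_le_one (s : Finset ℚ) :
    ∃ p : ℕ, ∃ _ : Fact p.Prime, ∀ q ∈ s, ‖(q : ℚ_[p])‖ ≤ 1 := by
  obtain ⟨p, hps, hp⟩ := Nat.exists_infinite_primes (s.sup Rat.den + 1)
  have : Fact p.Prime := ⟨hp⟩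
  refine ⟨p, this, fun q hq => Padic.norm_rat_le_one fun hdvd => ?_⟩
  have hpq : p ≤ q.den := Nat.le_of_dvd q.den_pos hdvd
  have hqs : q.den ≤ s.sup Rat.den := Finset.le_sup hq
  omega

theorem exists_prime_forall_norm_coeff_le_one {σ : Type*} (T : Finset (MvPolynomial σ ℚ)) :
    ∃ p : ℕ, ∃ _ : Fact p.Prime, ∀ P ∈ T, ∀ m, ‖((P.coeff m : ℚ) : ℚ_[p])‖ ≤ 1 := by
  classical
  obtain ⟨p, hp, hT⟩ := exists_prime_forall_norm_rat_le_one
    (T.biUnion fun P => P.support.image P.coeff)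
  refine ⟨p, hp, fun P hP m => ?_⟩
  by_cases hm : m ∈ P.support
  · exact hT _ (Finset.mem_biUnion.2 ⟨P, hP, Finset.mem_image_of_mem _ hm⟩)
  · simp [MvPolynomial.notMem_support_iff.1 hm]

theorem exists_injective_ringHom_padicAlgCl {A : Type*} [CommRing A] [IsDomain A] [Algebra ℚ A]
    [Algebra.FiniteType ℚ A] (S : Finset A) :
    ∃ p : ℕ, ∃ _ : Fact p.Prime, ∃ φ : A →+* PadicAlgCl p,
      Function.Injective φ ∧ ∀ s ∈ S, ‖φ s‖ ≤ 1 := by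
  classical
  obtain ⟨d, g, hg, hgint⟩ := exists_integral_inj_algHom_of_fg ℚ A
  choose P hPmonic hProot using fun s => hgint s
  obtain ⟨p, hp, hcoeff⟩ := exists_prime_forall_norm_coeff_le_one (S.biUnion fun s => (P s).coeffs)
  obtain ⟨x, hx⟩ := exists_algebraicIndependent_rat_padicInt (Fin d) p
  let y (i : Fin d) : PadicAlgCl p := algebraMap ℚ_[p] _ (x i)
  have hy : AlgebraicIndependent ℚ y := hx.map'
    (f := IsScalarTower.toAlgHom ℚ ℚ_[p] (PadicAlgCl p)) (algebraMap ℚ_[p] _).injective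
  have hy1 (i : Fin d) : ‖y i‖ ≤ 1 := (norm_algebraMap' _ _).trans_le (x i).2
  let f : MvPolynomial (Fin d) ℚ →+* PadicAlgCl p := (MvPolynomial.aeval y).toRingHom
  obtain ⟨φ, hφ, hφg⟩ := exists_injective_comp_eq_of_isIntegral (g := g.toRingHom) (f := f)
    hg hgint hy
  refine ⟨p, hp, φ, hφ, fun s hs =>
    norm_le_one_of_eval₂_eq_zero (f := f) (hPmonic s) (fun n => ?_) ?_⟩
  · by_cases hn : (P s).coeff n = 0
    · simp [hn]
    refine norm_eval₂_le_one hy1 fun m => ?_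
    rw [IsScalarTower.algebraMap_apply ℚ ℚ_[p] (PadicAlgCl p), norm_algebraMap', eq_ratCast]
    exact hcoeff _ (Finset.mem_biUnion.2 ⟨s, hs, Polynomial.coeff_mem_coeffs hn⟩) m
  · rw [← hφg, ← Polynomial.hom_eval₂, hProot, map_zero]

/-! ### Exponential sums in characteristic zero -/

theorem map_val_units_zpow {M G : Type*} [Monoid M] [DivisionMonoid G] (f : M →* G) (u : Mˣ)
    (n : ℤ) : f (u ^ n : Mˣ) = f u ^ n := by
  rw [← Units.coe_map, map_zpow, Units.val_zpow_eq_zpow_val, Units.coe_map]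

theorem coeff_eq_zero_of_infinite_zeros_of_finiteType {ι A : Type*} [Fintype ι] [CommRing A]
    [IsDomain A] [Algebra ℚ A] [Algebra.FiniteType ℚ A] {c : ι → A} {l : ι → Aˣ}
    (hnd : NondegenerateBases l) (hinf : {n : ℤ | ∑ j, c j * (l j ^ n : Aˣ) = 0}.Infinite)
    (j : ι) : c j = 0 := by
  classical
  obtain ⟨p, hp, φ, hφ, hle⟩ := exists_injective_ringHom_padicAlgCl
    (Finset.univ.image (fun j => (l j : A)) ∪ Finset.univ.image fun j => ((l j)⁻¹ : Aˣ).val)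
  have hle₁ (j : ι) : ‖φ (l j)‖ ≤ 1 := hle _ (by simp)
  have hle₂ (j : ι) : ‖φ ((l j)⁻¹ : Aˣ)‖ ≤ 1 := hle _ (by simp)
  have hmul (j : ι) : ‖φ (l j)‖ * ‖φ ((l j)⁻¹ : Aˣ)‖ = 1 := by
    rw [← norm_mul, ← map_mul, Units.mul_inv, map_one, norm_one]
  have hnorm (j : ι) : ‖φ (l j)‖ = 1 := (hle₁ j).antisymm <|
    (hmul j).symm.trans_le (mul_le_of_le_one_right (norm_nonneg _) (hle₂ j))
  refine (map_eq_zero_iff φ hφ).1 (coeff_eq_zero_of_infinite_zeros_of_padic (p := p)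
    (c := fun j => φ (c j)) (l := fun j => φ (l j)) hnorm (fun N hN i j h => hnd N hN ?_)
    (hinf.mono fun n hn => ?_) j)
  · exact Units.ext (hφ (by simpa only [Units.val_pow_eq_pow_val, map_pow] using h))
  · have hzpow (j : ι) : φ (l j) ^ n = φ (l j ^ n : Aˣ) :=
      (map_val_units_zpow (φ : A →* PadicAlgCl p) (l j) n).symm
    simp only [Set.mem_ofPred_eq, hzpow, ← map_mul, ← map_sum] at hn ⊢
    rw [hn, map_zero]

theorem coeff_eq_zero_of_infinite_zeros {ι k : Type*} [Fintype ι] [Field k] [CharZero k]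
    {c l : ι → k} (hl : ∀ j, l j ≠ 0) (hnd : NondegenerateBases l)
    (hinf : {n : ℤ | ∑ j, c j * l j ^ n = 0}.Infinite) (j : ι) : c j = 0 := by
  let A := Algebra.adjoin ℚ (Set.range c ∪ Set.range l ∪ Set.range l⁻¹)
  have hc (j : ι) : c j ∈ A := Algebra.subset_adjoin (Or.inl (Or.inl ⟨j, rfl⟩))
  have hlA (j : ι) : l j ∈ A := Algebra.subset_adjoin (Or.inl (Or.inr ⟨j, rfl⟩))
  have hlA' (j : ι) : (l j)⁻¹ ∈ A := Algebra.subset_adjoin (Or.inr ⟨j, rfl⟩)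
  have : Algebra.FiniteType ℚ A := .adjoin_of_finite
    (((Set.finite_range c).union (Set.finite_range l)).union (Set.finite_range l⁻¹))
  let u (j : ι) : Aˣ := ⟨⟨l j, hlA j⟩, ⟨(l j)⁻¹, hlA' j⟩, Subtype.ext (mul_inv_cancel₀ (hl j)),
    Subtype.ext (inv_mul_cancel₀ (hl j))⟩
  have hcA := coeff_eq_zero_of_infinite_zeros_of_finiteType (c := fun j => (⟨c j, hc j⟩ : A))
    (l := u) (fun N hN i j h => hnd N hN (congrArg (fun v : Aˣ => ((v : A) : k)) h))
    (hinf.mono fun n hn => ?_) j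
  · exact congrArg Subtype.val hcA
  · have hzpow (j : ι) : ((u j ^ n : Aˣ) : A) = l j ^ n :=
      map_val_units_zpow (algebraMap A k : A →* k) (u j) n
    rw [Set.mem_ofPred_eq] at hn ⊢
    apply Subtype.ext
    simpa only [AddSubmonoidClass.coe_finsetSum, MulMemClass.coe_mul, hzpow, ZeroMemClass.coe_zero]
      using hn

/-! ### Forms on the orbit -/

section

variable {k : Type*} [Field k] {t : ℕ}

theorem eval_cons_mul_zpow (p : Fin t → k) (a : Fin (t + 1) → k)
    (F : MvPolynomial (Fin (t + 1)) k) (n : ℤ) :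
    MvPolynomial.eval (Fin.cons (a 0) fun i => a i.succ * p i ^ n) F =
      ∑ m : F.support, (F.coeff m * ∏ j, a j ^ m.1 j) * (∏ i : Fin t, p i ^ m.1 i.succ) ^ n := by
  rw [MvPolynomial.eval_eq', ← Finset.sum_coe_sort]
  refine Finset.sum_congr rfl fun m _ => ?_
  have hswap (i : Fin t) : (p i ^ n) ^ m.1 i.succ = (p i ^ m.1 i.succ) ^ n := by
    rw [← zpow_natCast, ← zpow_natCast, zpow_comm]
  simp only [Fin.prod_univ_succ, Fin.cons_zero, Fin.cons_succ, mul_pow, hswap,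
    Finset.prod_mul_distrib, Finset.prod_zpow, mul_assoc]

theorem eq_of_apply_succ_eq_of_isHomogeneous {R : Type*} [CommSemiring R] {d : ℕ}
    {F : MvPolynomial (Fin (t + 1)) R} (hF : F.IsHomogeneous d) {m m' : Fin (t + 1) →₀ ℕ}
    (hm : m ∈ F.support) (hm' : m' ∈ F.support) (h : ∀ i : Fin t, m i.succ = m' i.succ) :
    m = m' := by
  have hdeg : ∀ u ∈ F.support, u 0 + ∑ i : Fin t, u i.succ = d := fun u hu => by
    rw [← Fin.sum_univ_succ, ← Finsupp.degree_eq_sum, Finsupp.degree_eq_weight_one]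
    exact hF (MvPolynomial.mem_support_iff.1 hu)
  have h₀ : m 0 = m' 0 := by
    have hsum := (hdeg m hm).trans (hdeg m' hm').symm
    simpa only [h, add_left_inj] using hsum
  exact Finsupp.ext (Fin.cases h₀ h)

theorem eq_of_prod_pow_pow_eq {p : Fin t → k} (hp0 : ∀ i, p i ≠ 0)
    (hfree : ∀ m : Fin t → ℤ, (∏ i, p i ^ m i) = 1 → ∀ i, m i = 0) {u v : Fin t → ℕ} {N : ℕ}
    (hN : 0 < N) (h : (∏ i, p i ^ u i) ^ N = (∏ i, p i ^ v i) ^ N) (i : Fin t) : u i = v i := by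
  have hv : (∏ i, p i ^ v i) ^ N ≠ 0 :=
    pow_ne_zero _ (Finset.prod_ne_zero_iff.2 fun i _ => pow_ne_zero _ (hp0 i))
  have hone : ∏ i, p i ^ (((u i : ℤ) - v i) * N) = 1 := by
    simp only [zpow_mul, zpow_sub₀ (hp0 _), zpow_natCast]
    rw [Finset.prod_pow, Finset.prod_div_distrib, div_pow, h, div_self hv]
  have hzero := (mul_eq_zero.1 (hfree _ hone i)).resolve_right (by exact_mod_cast hN.ne')
  exact_mod_cast sub_eq_zero.1 hzero

variable {p : Fin t → k} {a : Fin (t + 1) → k}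

theorem nondegenerateBases_prod_pow_succ {R : Type*} [CommSemiring R] (hp0 : ∀ i, p i ≠ 0)
    (hfree : ∀ m : Fin t → ℤ, (∏ i, p i ^ m i) = 1 → ∀ i, m i = 0)
    {F : MvPolynomial (Fin (t + 1)) R} {d : ℕ} (hF : F.IsHomogeneous d) :
    NondegenerateBases fun m : F.support => ∏ i : Fin t, p i ^ m.1 i.succ :=
  fun _ hN m m' h => Subtype.ext (eq_of_apply_succ_eq_of_isHomogeneous hF m.2 m'.2
    (eq_of_prod_pow_pow_eq hp0 hfree hN h))

theorem finite_setOf_eval_cons_mul_zpow_eq_zero [CharZero k] (hp0 : ∀ i, p i ≠ 0)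
    (hfree : ∀ m : Fin t → ℤ, (∏ i, p i ^ m i) = 1 → ∀ i, m i = 0) (ha : ∀ j, a j ≠ 0)
    {F : MvPolynomial (Fin (t + 1)) k} (hF0 : F ≠ 0) {d : ℕ} (hF : F.IsHomogeneous d) :
    {n : ℤ | MvPolynomial.eval (Fin.cons (a 0) fun i => a i.succ * p i ^ n) F = 0}.Finite := by
  by_contra hinf
  simp only [eval_cons_mul_zpow] at hinf
  obtain ⟨m, hm⟩ := MvPolynomial.support_nonempty.2 hF0
  have hcoeff := coeff_eq_zero_of_infinite_zeros
    (fun m => Finset.prod_ne_zero_iff.2 fun i _ => pow_ne_zero _ (hp0 i))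
    (nondegenerateBases_prod_pow_succ hp0 hfree hF) hinf ⟨m, hm⟩
  exact mul_ne_zero (MvPolynomial.mem_support_iff.1 hm)
    (Finset.prod_ne_zero_iff.2 fun j _ => pow_ne_zero _ (ha j)) hcoeff

theorem ne_zero_of_finite_setOf_eval_X_eq_zero {j : Fin (t + 1)}
    (h : {n : ℤ | MvPolynomial.eval (Fin.cons (a 0) fun i => a i.succ * p i ^ n)
      (MvPolynomial.X j : MvPolynomial (Fin (t + 1)) k) = 0}.Finite) : a j ≠ 0 := by
  rintro hj
  refine Set.infinite_univ (h.subset fun n _ => ?_)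
  rw [Set.mem_ofPred_eq, MvPolynomial.eval_X]
  cases j using Fin.cases with
  | zero => rwa [Fin.cons_zero]
  | succ i => rw [Fin.cons_succ, hj, zero_mul]

end

theorem stmt_15_general {k : Type*} [Field k] [CharZero k] {t : ℕ} {p : Fin t → k}
    (hp0 : ∀ i, p i ≠ 0) (hfree : ∀ m : Fin t → ℤ, (∏ i, p i ^ m i) = 1 → ∀ i, m i = 0)
    (a : Fin (t + 1) → k) :
    (∀ j, a j ≠ 0) ↔
      ∀ F : MvPolynomial (Fin (t + 1)) k, F ≠ 0 → (∃ d, F.IsHomogeneous d) →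
        {n : ℤ | MvPolynomial.eval (Fin.cons (a 0) fun i => a i.succ * p i ^ n) F = 0}.Finite := by
  constructor
  · rintro ha F hF0 ⟨d, hF⟩
    exact finite_setOf_eval_cons_mul_zpow_eq_zero hp0 hfree ha hF0 hF
  · intro h j
    exact ne_zero_of_finite_setOf_eval_X_eq_zero
      (h (MvPolynomial.X j) (MvPolynomial.X_ne_zero j) ⟨1, MvPolynomial.isHomogeneous_X k j⟩)

/-- in characteristic `0`, with `p₁, …, p_t` generating a free abelian
subgroup of `k˟` of rank `t` and `(a₀ : ⋯ : a_t)` a point of `ℙ^t`, the orbit under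
`diag(1, p₁, …, p_t)` is critically dense iff every `aᵢ` is nonzero. -/
theorem stmt_15 {k : Type*} [Field k] [IsAlgClosed k] [CharZero k]
    (t : ℕ) (ht : 1 ≤ t) (p : Fin t → k)
    (hp0 : ∀ i, p i ≠ 0)
    (hfree : ∀ m : Fin t → ℤ, (∏ i, p i ^ m i) = 1 → ∀ i, m i = 0)
    (a : Fin (t + 1) → k) (ha : a ≠ 0) :
    (∀ j, a j ≠ 0) ↔
      ∀ F : MvPolynomial (Fin (t + 1)) k, F ≠ 0 → (∃ d, F.IsHomogeneous d) →
        {n : ℤ | MvPolynomial.eval (Fin.cons (a 0) fun i => a i.succ * p i ^ n) F = 0}.Finite :=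
  stmt_15_general hp0 hfree a
end
end

section
/- Let t ≥ 2 and let p_1, …, p_t ∈ k be algebraically independent over the prime subfield of k. Let A be the k-subalgebra of End_k(k[Y,Y⁻¹]) generated by the Eulerian derivatives D_{p_1}, …, D_{p_t}, let A₊ be the two-sided ideal of A generated by D_{p_1}, …, D_{p_t}, and let 𝕜 denote the left A-module A/A₊. Then, computing Ext groups in the category of left A-modules: Ext¹_A(𝕜, A) = 0, while Ext²_A(𝕜, A) is infinite-dimensional as a k-vector space. (In particular A satisfies the condition χ₁ for the module A but fails the condition χ₂.) -/
set_option synthInstance.maxHeartbeats 1000000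
set_option maxHeartbeats 4000000
set_option maxSynthPendingDepth 3

noncomputable section

open CategoryTheory

universe u

/-!
The Eulerian algebra `A` acts by difference operators `T ^ m ↦ f (p ^ m) T ^ (m - n)`, and
independence of the parameters allows one to compute with the symbols `f`, which are polynomials.
Let `B ⊇ A` consist of the sums of operators with `deg f ≤ n`. Interpolation at the points `p ^ m`
shows that `A` is the subalgebra of `B` preserving `k[T]`, so there is an exact sequence
`0 → A → B → Q → 0`, where `Q` is a direct sum of copies of `k[T;T⁻¹] / k[T]` and an operator `s` is
sent to the polar parts of the elements `s (T ^ j)`, `j ∈ ℕ`.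

On symbols, the relations between the generators become Koszul relations between the polynomials
`X i - c i`. With at least two parameters, these force every linear map from `A₊` to `B` or to `A`
to be a right multiplication. Hence `Ext¹(A / A₊, A)` and `Ext¹(A / A₊, B)` vanish, and the
connecting map embeds `Hom(A₊, Q) / Q` into `Ext²(A / A₊, A)`. The derivative of symbols at the
point `1` gives an `A`-linear map `A₊ → k[T;T⁻¹]`, and hence one `A₊ → Q` for each copy. Residues
of the values at a generator distinguish these maps, and they vanish on the maps that come from `Q`.
-/

section HomologicalAlgebra

open Abelian.Ext

universe v

variable {C : Type*} [Category.{v} C] [Abelian C] [HasExt.{v} C]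

section Comparison

variable {R : Type*} [Ring R] [Linear R C] {X : C} (P : ProjectiveResolution X) (Y : C) (n : ℕ)

variable (R) in
/-- The `n`-cocycles of the complex of morphisms from a projective resolution to `Y`. -/
abbrev homCocycles : Submodule R (P.complex.X n ⟶ Y) :=
  LinearMap.ker (Linear.leftComp R Y (P.complex.d (n + 1) n))

variable (R) in
/-- The differential of the complex of morphisms from a projective resolution to `Y`, with values
in the cocycles. -/
abbrev homCoboundary : (P.complex.X n ⟶ Y) →ₗ[R] homCocycles R P Y (n + 1) :=
  (Linear.leftComp R Y (P.complex.d (n + 1) n)).codRestrict _ fun f ↦ by simp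

/-- The class in `Abelian.Ext` of a cocycle, as a linear map. -/
def extMkLinear : homCocycles R P Y n →ₗ[R] Abelian.Ext X Y n where
  toFun f := P.extMk f.1 (n + 1) rfl (LinearMap.mem_ker.1 f.2)
  map_add' f g := (P.add_extMk f.1 g.1 (n + 1) rfl _ _).symm
  map_smul' r f := by
    rw [RingHom.id_apply, smul_eq_comp_mk₀, P.extMk_comp_mk₀ _ _ rfl (LinearMap.mem_ker.1 f.2)]
    simp

theorem extMkLinear_surjective : Function.Surjective (extMkLinear (R := R) P Y n) := fun α ↦
  let ⟨f, hf, h⟩ := P.extMk_surjective α (n + 1) rfl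
  ⟨⟨f, hf⟩, h⟩

theorem ker_extMkLinear_succ :
    LinearMap.ker (extMkLinear (R := R) P Y (n + 1)) = LinearMap.range (homCoboundary R P Y n) := by
  ext f
  exact (P.extMk_eq_zero_iff f.1 _ rfl (LinearMap.mem_ker.1 f.2) n rfl).trans
    (by simp [Subtype.ext_iff])

variable (R X) in
/-- The functors `Ext R C (n + 1)`, defined by projective resolutions, agree `R`-linearly with
`Abelian.Ext`, for which long exact sequences are available. -/
def extSuccLinearEquiv [EnoughProjectives C] :
    ((Ext R C (n + 1)).obj (.op X)).obj Y ≃ₗ[R] Abelian.Ext X Y (n + 1) :=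
  let P := projectiveResolution X
  let K := P.complex.linearYonedaObj R Y
  let e : _ ≃ₗ[R] homCocycles R P Y (n + 1) ⧸ LinearMap.range (homCoboundary R P Y n) :=
    (P.isoExt (n + 1) Y ≪≫ K.homologyIsoSc' n (n + 1) (n + 2) (by simp) (by simp) ≪≫
      (K.sc' n (n + 1) (n + 2)).moduleCatHomologyIso).toLinearEquiv
  e ≪≫ₗ Submodule.quotEquivOfEq _ _ (ker_extMkLinear_succ P Y n).symm ≪≫ₗ
    (extMkLinear P Y (n + 1)).quotKerEquivOfSurjective (extMkLinear_surjective P Y _)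

end Comparison

section Extension

variable {S T : ShortComplex C}

theorem subsingleton_ext_of_forall_exists_comp_eq (hS : S.ShortExact) [Projective S.X₂] {Y : C}
    (h : ∀ f : S.X₁ ⟶ Y, ∃ g : S.X₂ ⟶ Y, S.f ≫ g = f) :
    Subsingleton (Abelian.Ext S.X₃ Y 1) := by
  refine subsingleton_of_forall_eq 0 fun x ↦ ?_
  obtain ⟨y, rfl⟩ := contravariant_sequence_exact₃ hS Y x (eq_zero_of_projective _) (add_zero 1)
  obtain ⟨f, rfl⟩ := mk₀_bijective _ _ |>.2 y
  obtain ⟨g, rfl⟩ := h f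
  rw [← mk₀_comp_mk₀, hS.extClass_comp_assoc]

theorem exists_comp_eq_of_extClass_comp_comp_eq_zero (hS : S.ShortExact) (hT : T.ShortExact)
    [Subsingleton (Abelian.Ext S.X₃ T.X₂ 1)] (f : S.X₁ ⟶ T.X₃)
    (hf : (hS.extClass.comp (mk₀ f) (add_zero 1)).comp hT.extClass (rfl : 1 + 1 = 2) = 0) :
    ∃ g : S.X₂ ⟶ T.X₃, S.f ≫ g = f := by
  obtain ⟨y, hy⟩ := covariant_sequence_exact₃ _ hT _ rfl hf
  rw [Subsingleton.elim y 0, zero_comp] at hy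
  obtain ⟨g, hg⟩ := contravariant_sequence_exact₁ hS _ (mk₀ f) rfl hy.symm
  obtain ⟨g, rfl⟩ := mk₀_bijective _ _ |>.2 g
  rw [mk₀_comp_mk₀] at hg
  exact ⟨g, (mk₀_bijective _ _).1 hg⟩

variable {k V : Type*} [Field k] [Linear k C] [AddCommGroup V] [Module k V]

theorem finite_of_finite_ext_two (hS : S.ShortExact) (hT : T.ShortExact)
    [Subsingleton (Abelian.Ext S.X₃ T.X₂ 1)] [Module.Finite k (Abelian.Ext S.X₃ T.X₁ 2)]
    (Λ : (S.X₁ ⟶ T.X₃) →ₗ[k] V) (hΛ : Function.Surjective Λ)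
    (hΛ' : ∀ g : S.X₂ ⟶ T.X₃, Λ (S.f ≫ g) = 0) : Module.Finite k V := by
  let δ : (S.X₁ ⟶ T.X₃) →ₗ[k] Abelian.Ext S.X₃ T.X₁ 2 :=
    (postcompOfLinear hT.extClass k _ (rfl : 1 + 1 = 2)).comp
      ((precompOfLinear hS.extClass k _ (add_zero 1)).comp linearEquiv₀.symm.toLinearMap)
  have hδ : LinearMap.ker δ ≤ LinearMap.ker Λ := fun f hf ↦ by
    obtain ⟨g, rfl⟩ := exists_comp_eq_of_extClass_comp_comp_eq_zero hS hT f hf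
    exact hΛ' g
  have : Module.Finite k ((S.X₁ ⟶ T.X₃) ⧸ LinearMap.ker δ) :=
    .equiv δ.quotKerEquivRange.symm
  refine .of_surjective ((LinearMap.ker δ).liftQ Λ hδ) fun v ↦ ?_
  obtain ⟨f, rfl⟩ := hΛ v
  exact ⟨Submodule.Quotient.mk f, rfl⟩

end Extension

section Modules

variable {A : Type u} [Ring A] {I : Ideal A} {M N P : Type u} [AddCommGroup M] [Module A M]
  [AddCommGroup N] [Module A N] [AddCommGroup P] [Module A P]

/-- The short complex `I ⟶ A ⟶ A ⧸ I`. -/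
abbrev idealShortComplex (I : Ideal A) : ShortComplex (ModuleCat.{u} A) :=
  .moduleCatMk I.subtype I.mkQ (LinearMap.exact_subtype_mkQ I).linearMap_comp_eq_zero

theorem idealShortComplex_shortExact (I : Ideal A) : (idealShortComplex I).ShortExact :=
  ModuleCat.shortComplex_shortExact _ (LinearMap.exact_subtype_mkQ I) I.injective_subtype
    I.mkQ_surjective

theorem subsingleton_ext_one_of_forall_eq_smul
    (hM : ∀ f : I →ₗ[A] M, ∃ m : M, ∀ x : I, f x = (x : A) • m) :
    Subsingleton (Abelian.Ext (ModuleCat.of A (A ⧸ I)) (ModuleCat.of A M) 1) := by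
  have : Projective (idealShortComplex I).X₂ :=
    ModuleCat.projective_of_free (Module.Basis.singleton Unit A)
  refine subsingleton_ext_of_forall_exists_comp_eq (idealShortComplex_shortExact I) fun f ↦ ?_
  obtain ⟨m, hm⟩ := hM f.hom
  refine ⟨ModuleCat.ofHom (LinearMap.toSpanSingleton A M m), ?_⟩
  ext x
  exact (hm x).symm

theorem finite_of_finite_ext_two_quotient {k V : Type*} [Field k] [Algebra k A] [Module k P]
    [IsScalarTower k A P] [AddCommGroup V] [Module k V] {f : M →ₗ[A] N} {g : N →ₗ[A] P}
    (hfg : Function.Exact f g) (hf : Function.Injective f) (hg : Function.Surjective g)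
    (hN : ∀ f : I →ₗ[A] N, ∃ m : N, ∀ x : I, f x = (x : A) • m)
    (x : I) (Λ : P →ₗ[k] V) (hΛ : ∀ v, ∃ f : I →ₗ[A] P, Λ (f x) = v)
    (hΛx : ∀ m : P, Λ ((x : A) • m) = 0)
    (hExt : Module.Finite k (Abelian.Ext (ModuleCat.of A (A ⧸ I)) (ModuleCat.of A M) 2)) :
    Module.Finite k V := by
  let S := idealShortComplex I
  let T := ShortComplex.moduleCatMk f g hfg.linearMap_comp_eq_zero
  have : Subsingleton (Abelian.Ext S.X₃ T.X₂ 1) := subsingleton_ext_one_of_forall_eq_smul hN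
  have : Module.Finite k (Abelian.Ext S.X₃ T.X₁ 2) := hExt
  let evalAt : (S.X₁ ⟶ T.X₃) →ₗ[k] V :=
    { toFun φ := Λ (φ.hom x)
      map_add' φ ψ := Λ.map_add _ _
      map_smul' c φ :=
        (congrArg Λ (algebraMap_smul (M := P) A c (φ.hom x))).trans (Λ.map_smul c _) }
  refine finite_of_finite_ext_two (S := S) (T := T) (idealShortComplex_shortExact I)
    (ModuleCat.shortComplex_shortExact _ hfg hf hg) evalAt (fun v ↦ ?_) fun φ ↦ ?_
  · obtain ⟨f, hf⟩ := hΛ v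
    exact ⟨ModuleCat.ofHom f, hf⟩
  · let φ' : A →ₗ[A] P := φ.hom
    have hφ' : φ' x = (x : A) • φ' 1 := by rw [← map_smul, smul_eq_mul, mul_one]
    exact (congrArg Λ hφ').trans (hΛx _)

end Modules

end HomologicalAlgebra

section TwoSidedIdeals

variable {k A : Type*} [CommRing k] [Ring A] [Algebra k A] {s : Set A}

theorem isTwoSided_span_of_adjoin_eq_top (hs : Algebra.adjoin k s = ⊤) :
    (Ideal.span s).IsTwoSided where
  mul_mem_of_left {a} b ha := by
    have hb : b ∈ Algebra.adjoin k s := hs ▸ Algebra.mem_top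
    induction hb using Algebra.adjoin_induction generalizing a with
    | mem x hx => exact Ideal.mul_mem_left _ a (Ideal.subset_span hx)
    | algebraMap r => exact Algebra.commutes r a ▸ Ideal.mul_mem_left _ _ ha
    | add x y _ _ hx hy => exact mul_add a x y ▸ add_mem (hx ha) (hy ha)
    | mul x y _ _ hx hy => exact mul_assoc a x y ▸ hy (hx ha)

theorem asIdeal_span_eq_span_of_adjoin_eq_top (hs : Algebra.adjoin k s = ⊤) :
    TwoSidedIdeal.asIdeal (TwoSidedIdeal.span s) = Ideal.span s := by
  have := isTwoSided_span_of_adjoin_eq_top hs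
  refine le_antisymm ?_ (Ideal.span_le.2 TwoSidedIdeal.subset_span)
  rw [← Ideal.asIdeal_toTwoSided (Ideal.span s)]
  refine TwoSidedIdeal.asIdeal.monotone (TwoSidedIdeal.span_le.2 ?_)
  rw [Ideal.coe_toTwoSided]
  exact Ideal.subset_span

end TwoSidedIdeals

section Polynomials

open MvPolynomial
open scoped Pointwise

variable {σ : Type*}

section Degree

variable {R : Type*} [CommRing R]

variable (σ R) in
/-- The polynomials of total degree at most `n`. The bound is an integer, so that dividing by a
polynomial of degree one lowers it by one without truncation; negative bounds give `⊥`. -/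
def degreeLE (n : ℤ) : Submodule R (MvPolynomial σ R) :=
  restrictSupport R {s | (s.degree : ℤ) ≤ n}

variable {m n : ℤ} {f g : MvPolynomial σ R}

theorem mem_degreeLE : f ∈ degreeLE σ R n ↔ ∀ s ∈ f.support, (s.degree : ℤ) ≤ n := Iff.rfl

theorem degreeLE_mono (h : m ≤ n) : degreeLE σ R m ≤ degreeLE σ R n :=
  restrictSupport_mono R fun s (hs : (s.degree : ℤ) ≤ m) ↦ hs.trans h

theorem mem_degreeLE_natCast {n : ℕ} : f ∈ degreeLE σ R n ↔ f.totalDegree ≤ n := by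
  rw [mem_degreeLE, totalDegree, Finset.sup_le_iff]
  simp only [Nat.cast_le]
  rfl

theorem mem_degreeLE_zero : f ∈ degreeLE σ R 0 ↔ f = C (coeff 0 f) := by
  rw [← Nat.cast_zero, mem_degreeLE_natCast, Nat.le_zero, totalDegree_eq_zero_iff_eq_C]

theorem degreeLE_eq_bot_of_neg (hn : n < 0) : degreeLE σ R n = ⊥ := by
  refine eq_bot_iff.2 fun f hf ↦ support_eq_empty.1 (Finset.eq_empty_of_forall_notMem fun s hs ↦ ?_)
  have := mem_degreeLE.1 hf s hs
  omega

theorem monomial_mem_degreeLE {s : σ →₀ ℕ} (hs : (s.degree : ℤ) ≤ n) (a : R) :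
    monomial s a ∈ degreeLE σ R n :=
  (monomial_mem_restrictSupport R).2 (.inl hs)

theorem C_mem_degreeLE (a : R) : C a ∈ degreeLE σ R 0 :=
  monomial_mem_degreeLE (by simp) a

theorem X_mem_degreeLE (i : σ) : X i ∈ degreeLE σ R 1 :=
  monomial_mem_degreeLE (by simp) 1

theorem X_sub_C_mem_degreeLE (i : σ) (a : R) : X i - C a ∈ degreeLE σ R 1 :=
  sub_mem (X_mem_degreeLE i) (degreeLE_mono zero_le_one (C_mem_degreeLE a))

theorem mul_mem_degreeLE (hf : f ∈ degreeLE σ R m) (hg : g ∈ degreeLE σ R n) :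
    f * g ∈ degreeLE σ R (m + n) := by
  have h : f * g ∈ restrictSupport R ({s : σ →₀ ℕ | (s.degree : ℤ) ≤ m} +
      {s : σ →₀ ℕ | (s.degree : ℤ) ≤ n}) := by
    rw [restrictSupport_add]
    exact Submodule.mul_mem_mul hf hg
  refine restrictSupport_mono R ?_ h
  rintro _ ⟨s, hs, t, ht, rfl⟩
  simp only [Set.mem_ofPred_eq, map_add, Nat.cast_add] at *
  omega

theorem mul_X_mem_degreeLE_iff {i : σ} : f * X i ∈ degreeLE σ R n ↔ f ∈ degreeLE σ R (n - 1) := by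
  simp [mem_degreeLE, support_mul_X, le_sub_iff_add_le]

theorem aeval_X_mem_degreeLE (o : σ) {P : Polynomial R} {n : ℕ} (hP : P.degree < n) :
    Polynomial.aeval (X o) P ∈ degreeLE σ R (n - 1) := by
  rw [Polynomial.aeval_def, Polynomial.eval₂_eq_sum, Polynomial.sum]
  refine sum_mem fun i hi ↦ ?_
  have hi' : i < n := by exact_mod_cast (Polynomial.le_degree_of_mem_supp i hi).trans_lt hP
  rw [algebraMap_eq, X_pow_eq_monomial, C_mul_monomial]
  exact monomial_mem_degreeLE (by rw [Finsupp.degree_single]; omega) _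

/-- The substitution `X i ↦ a i * X i`. -/
def rescale (a : σ → R) : MvPolynomial σ R →ₐ[R] MvPolynomial σ R :=
  aeval fun i ↦ C (a i) * X i

@[simp]
theorem rescale_C (a : σ → R) (c : R) : rescale a (C c) = C c := aeval_C _ _

@[simp]
theorem rescale_X (a : σ → R) (i : σ) : rescale a (X i) = C (a i) * X i := aeval_X _ _

@[simp]
theorem rescale_one : rescale (1 : σ → R) = AlgHom.id R _ := by
  ext1 i
  simp

theorem eval_rescale (x a : σ → R) (f : MvPolynomial σ R) :
    eval x (rescale a f) = eval (a * x) f := by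
  have : (aeval x).comp (rescale a) = aeval (a * x) := by
    ext1 i
    simp
  exact DFunLike.congr_fun this f

theorem rescale_rescale (a b : σ → R) (f : MvPolynomial σ R) :
    rescale a (rescale b f) = rescale (b * a) f := by
  have : (rescale a).comp (rescale b) = rescale (b * a) := by
    ext1 i
    simp [mul_assoc]
  exact DFunLike.congr_fun this f

theorem rescale_monomial (a : σ → R) (s : σ →₀ ℕ) (c : R) :
    rescale a (monomial s c) = monomial s (c * s.prod fun i e ↦ a i ^ e) := by
  rw [rescale, aeval_monomial, algebraMap_eq, monomial_eq, C_mul, map_finsuppProd, mul_assoc,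
    ← Finsupp.prod_mul]
  simp only [mul_pow, map_pow]

theorem rescale_mem_degreeLE (a : σ → R) (hf : f ∈ degreeLE σ R n) :
    rescale a f ∈ degreeLE σ R n := by
  rw [f.as_sum, map_sum]
  refine sum_mem fun s hs ↦ ?_
  rw [rescale_monomial]
  exact monomial_mem_degreeLE (mem_degreeLE.1 hf s hs) _

/-- The submodule `∑ᵢ M (Xᵢ - cᵢ)`. -/
def mulXSubC (c : σ → R) (M : Submodule R (MvPolynomial σ R)) : Submodule R (MvPolynomial σ R) :=
  ⨆ i, M.map (LinearMap.mulRight R (X i - C (c i)))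

theorem mulXSubC_mono (c : σ → R) : Monotone (mulXSubC c) := fun _ _ h ↦
  iSup_mono fun _ ↦ Submodule.map_mono h

theorem mul_X_sub_C_mem_mulXSubC {M : Submodule R (MvPolynomial σ R)} (c : σ → R) (i : σ)
    (hf : f ∈ M) : f * (X i - C (c i)) ∈ mulXSubC c M :=
  Submodule.mem_iSup_of_mem i ⟨f, hf, rfl⟩

theorem mulXSubC_le_iff {c : σ → R} {M N : Submodule R (MvPolynomial σ R)} :
    mulXSubC c M ≤ N ↔ ∀ i, ∀ f ∈ M, f * (X i - C (c i)) ∈ N := by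
  rw [mulXSubC, iSup_le_iff]
  exact forall_congr' fun _ ↦ Submodule.map_le_iff_le_comap

theorem monomial_sub_C_eval_mem_mulXSubC (c : σ → R) (s : σ →₀ ℕ) (a : R) :
    monomial s a ∈ degreeLE σ R n →
      monomial s a - C (eval c (monomial s a)) ∈ mulXSubC c (degreeLE σ R (n - 1)) := by
  refine induction_on_monomial (motive := fun f ↦ ∀ n, f ∈ degreeLE σ R n →
    f - C (eval c f) ∈ mulXSubC c (degreeLE σ R (n - 1))) (fun a n _ ↦ by simp)
    (fun f i ih n hf ↦ ?_) s a n
  rw [mul_X_mem_degreeLE_iff] at hf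
  have h : f * X i - C (eval c (f * X i)) =
      f * (X i - C (c i)) + c i • (f - C (eval c f)) := by
    rw [map_mul, eval_X, C_mul, smul_eq_C_mul]
    ring
  rw [h]
  exact add_mem (mul_X_sub_C_mem_mulXSubC c i hf)
    (Submodule.smul_mem _ _ (mulXSubC_mono c (degreeLE_mono (by simp)) (ih _ hf)))

theorem sub_C_eval_mem_mulXSubC (c : σ → R) (hf : f ∈ degreeLE σ R n) :
    f - C (eval c f) ∈ mulXSubC c (degreeLE σ R (n - 1)) := by
  have h : f - C (eval c f) =
      ∑ s ∈ f.support, (monomial s (coeff s f) - C (eval c (monomial s (coeff s f)))) := by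
    rw [Finset.sum_sub_distrib, ← map_sum, ← map_sum, support_sum_monomial_coeff]
  rw [h]
  exact sum_mem fun s hs ↦
    monomial_sub_C_eval_mem_mulXSubC c s _ (monomial_mem_degreeLE (mem_degreeLE.1 hf s hs) _)

end Degree

section LinearFactors

variable {R : Type*} [CommRing R]

theorem X_sub_C_dvd_sub_aeval_update [DecidableEq σ] (o : σ) (c : R) (f : MvPolynomial σ R) :
    X o - C c ∣ f - aeval (Function.update X o (C c)) f := by
  induction f using MvPolynomial.induction_on with
  | C a => simp
  | add f g hf hg => simpa only [map_add, add_sub_add_comm] using dvd_add hf hg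
  | mul_X f i hf =>
    rw [map_mul, aeval_X]
    by_cases hi : i = o
    · subst hi
      obtain ⟨g, hg⟩ := hf
      rw [Function.update_self]
      exact ⟨f + g * C c, by linear_combination C c * hg⟩
    · rw [Function.update_of_ne hi, ← sub_mul]
      exact hf.mul_right _

variable [IsDomain R]

theorem totalDegree_X_sub_C (i : σ) (a : R) : (X i - C a).totalDegree = 1 := by
  refine le_antisymm (mem_degreeLE_natCast.1 (X_sub_C_mem_degreeLE i a)) ?_
  have h : Finsupp.single i 1 ∈ (X i - C a).support := by
    classical
    rw [mem_support_iff, coeff_sub, coeff_C, if_neg (Finsupp.single_ne_zero.2 one_ne_zero).symm,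
      sub_zero, coeff_X, if_pos rfl]
    exact one_ne_zero
  simpa using le_totalDegree h

theorem X_sub_C_ne_zero (i : σ) (a : R) : X i - C a ≠ 0 := fun h ↦ by
  simpa [h] using totalDegree_X_sub_C i a

theorem mul_X_sub_C_mem_degreeLE_iff {f : MvPolynomial σ R} {n : ℤ} {i : σ} {a : R} :
    f * (X i - C a) ∈ degreeLE σ R n ↔ f ∈ degreeLE σ R (n - 1) := by
  refine ⟨fun h ↦ ?_, fun h ↦ by simpa using mul_mem_degreeLE h (X_sub_C_mem_degreeLE i a)⟩
  obtain rfl | hf := eq_or_ne f 0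
  · exact zero_mem _
  have hl := X_sub_C_ne_zero i a
  obtain hn | hn := lt_or_ge n 0
  · rw [degreeLE_eq_bot_of_neg hn] at h
    exact absurd h (mul_ne_zero hf hl)
  lift n to ℕ using hn
  rw [mem_degreeLE_natCast, totalDegree_mul_of_isDomain hf hl, totalDegree_X_sub_C] at h
  exact degreeLE_mono (by omega) (mem_degreeLE_natCast.2 le_rfl)

theorem X_sub_C_dvd_of_dvd_mul_X_sub_C {o i : σ} (hi : i ≠ o) {a b : R} {f : MvPolynomial σ R}
    (h : X o - C a ∣ f * (X i - C b)) : X o - C a ∣ f := by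
  classical
  have hf := X_sub_C_dvd_sub_aeval_update o a f
  obtain ⟨g, hg⟩ := h
  have hg' := congrArg (aeval (Function.update X o (C a))) hg
  simp only [map_mul, map_sub, aeval_X, aeval_C, Function.update_self,
    Function.update_of_ne hi, algebraMap_eq, sub_self, zero_mul] at hg'
  rwa [(mul_eq_zero.1 hg').resolve_right (X_sub_C_ne_zero i b), sub_zero] at hf

theorem exists_forall_eq_mul_X_sub_C [Nontrivial σ] {f : σ → MvPolynomial σ R} {c : σ → R}
    (h : ∀ i j, f i * (X j - C (c j)) = f j * (X i - C (c i))) :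
    ∃ g, ∀ i, f i = g * (X i - C (c i)) := by
  obtain ⟨i, o, hi⟩ := exists_pair_ne σ
  obtain ⟨g, hg⟩ := X_sub_C_dvd_of_dvd_mul_X_sub_C hi ⟨f i, (h o i).trans (mul_comm _ _)⟩
  refine ⟨g, fun j ↦ mul_right_cancel₀ (X_sub_C_ne_zero o (c o)) ?_⟩
  rw [h j o, hg]
  ring

end LinearFactors

section Interpolation

variable {k ι : Type*} [Field k] {o : σ} {v : ι → σ → k} {s : Finset ι} {n : ℤ}

theorem exists_mem_degreeLE_eval_eq (hv : Set.InjOn (v · o) s) (r : ι → k) :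
    ∃ h ∈ degreeLE σ k (s.card - 1), ∀ i ∈ s, eval (v i) h = r i := by
  classical
  refine ⟨Polynomial.aeval (X o) (Lagrange.interpolate s (v · o) r),
    aeval_X_mem_degreeLE o (Lagrange.degree_interpolate_lt r hv), fun i hi ↦ ?_⟩
  rw [← aeval_eq_eval, ← Polynomial.aeval_algHom_apply, aeval_X]
  exact Lagrange.eval_interpolate_at_node r hv hi

/-- The polynomials of total degree at most `n` which vanish on `S`. -/
def vanishingDegreeLE (S : Set (σ → k)) (n : ℤ) : Submodule k (MvPolynomial σ k) :=
  degreeLE σ k n ⊓ (vanishingIdeal k S).restrictScalars k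

theorem mem_vanishingDegreeLE {S : Set (σ → k)} {f : MvPolynomial σ k} :
    f ∈ vanishingDegreeLE S n ↔ f ∈ degreeLE σ k n ∧ ∀ x ∈ S, eval x f = 0 := Iff.rfl

variable {c : σ → k}

theorem mulXSubC_degreeLE_le (hv : Set.InjOn (v · o) s) (hc : ∀ x ∈ s, v x o ≠ c o)
    (hn : s.card ≤ n) :
    mulXSubC c (degreeLE σ k n) ≤ mulXSubC c (vanishingDegreeLE (v '' s) n) ⊔
      (degreeLE σ k n).map (LinearMap.mulRight k (X o - C (c o))) := by
  refine mulXSubC_le_iff.2 fun i g hg ↦ ?_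
  obtain ⟨h, hh, hev⟩ := exists_mem_degreeLE_eval_eq hv fun x ↦ eval (v x) g / (v x o - c o)
  have hhl (a : σ) : h * (X a - C (c a)) ∈ degreeLE σ k n :=
    mul_X_sub_C_mem_degreeLE_iff.2 (degreeLE_mono (by omega) hh)
  have hvan : g - h * (X o - C (c o)) ∈ vanishingDegreeLE (v '' s) n := by
    refine mem_vanishingDegreeLE.2 ⟨sub_mem hg (hhl o), Set.forall_mem_image.2 fun x hx ↦ ?_⟩
    simp only [map_sub, map_mul, eval_X, eval_C, hev x hx,
      div_mul_cancel₀ _ (sub_ne_zero.2 (hc x hx)), sub_self]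
  have hsplit : g * (X i - C (c i)) = (g - h * (X o - C (c o))) * (X i - C (c i)) +
      h * (X i - C (c i)) * (X o - C (c o)) := by ring
  rw [hsplit]
  exact Submodule.add_mem_sup (mul_X_sub_C_mem_mulXSubC _ i hvan) ⟨_, hhl i, rfl⟩

theorem vanishingDegreeLE_insert_le (hv : Set.InjOn (v · o) s) (hc : ∀ x ∈ s, v x o ≠ c o)
    (hn : s.card ≤ n) :
    vanishingDegreeLE (insert c (v '' s)) (n + 1) ≤ mulXSubC c (vanishingDegreeLE (v '' s) n) := by
  intro f hf
  obtain ⟨hdeg, hfc, hfs⟩ := by simpa [mem_vanishingDegreeLE] using hf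
  have hmem : f ∈ mulXSubC c (degreeLE σ k n) := by
    simpa [hfc] using sub_C_eval_mem_mulXSubC c hdeg
  obtain ⟨w, hw, _, ⟨g, hg, rfl⟩, rfl⟩ :=
    Submodule.mem_sup.1 (mulXSubC_degreeLE_le hv hc hn hmem)
  have hle : mulXSubC c (vanishingDegreeLE (v '' s) n) ≤
      (vanishingIdeal k (v '' s)).restrictScalars k :=
    mulXSubC_le_iff.2 fun i _ hq ↦ Ideal.mul_mem_right _ _ hq.2
  have hw0 (x) (hx : x ∈ s) : eval (v x) w = 0 := hle hw _ ⟨x, hx, rfl⟩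
  refine add_mem hw (mul_X_sub_C_mem_mulXSubC c o (mem_vanishingDegreeLE.2
    ⟨hg, Set.forall_mem_image.2 fun x hx ↦ ?_⟩))
  have := hfs x hx
  simpa [hw0 x hx, sub_eq_zero, hc x hx] using this

end Interpolation

end Polynomials

section Parameters

/-- A family is multiplicatively independent if distinct monomials in it take distinct values. For
families of units this agrees with the condition that allows negative exponents. -/
def IsMulIndependent {ι M : Type*} [CommMonoid M] (p : ι → M) : Prop :=
  Function.Injective fun s : ι →₀ ℕ ↦ s.prod fun i e ↦ p i ^ e

namespace IsMulIndependent

open MvPolynomial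

theorem of_algebraicIndependent {ι F K : Type*} [CommRing F] [Nontrivial F] [CommRing K]
    [Algebra F K] {p : ι → Kˣ} (hp : AlgebraicIndependent F fun i ↦ (p i : K)) :
    IsMulIndependent p := fun s s' h ↦ by
  refine monomial_left_injective (one_ne_zero (α := F)) (hp ?_)
  simpa [aeval_monomial, Finsupp.prod] using congrArg Units.val h

theorem zpow_injective {ι G : Type*} [CommGroup G] {p : ι → G} (hp : IsMulIndependent p) (i : ι) :
    Function.Injective fun n : ℤ ↦ p i ^ n := by
  rw [injective_zpow_iff_not_isOfFinOrder, isOfFinOrder_iff_pow_eq_one]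
  rintro ⟨n, hn, h⟩
  have := hp (a₁ := Finsupp.single i n) (a₂ := 0) (by simpa using h)
  exact hn.ne' (Finsupp.single_eq_zero.1 this)

end IsMulIndependent

end Parameters

section Operators

open LaurentPolynomial (T T_apply)
open scoped LaurentPolynomial
open MvPolynomial

variable {σ R : Type*} [CommRing R]

/-- The point with coordinates `p i ^ n`. -/
def powPoint (p : σ → Rˣ) (n : ℤ) : σ → R := fun i ↦ (p i ^ n : Rˣ)

theorem powPoint_zero (p : σ → Rˣ) : powPoint p 0 = 1 := by
  ext i
  simp [powPoint]

theorem powPoint_add (p : σ → Rˣ) (m n : ℤ) : powPoint p (m + n) = powPoint p m * powPoint p n := by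
  ext i
  simp [powPoint, zpow_add]

theorem powPoint_neg_mul (p : σ → Rˣ) (n : ℤ) (i : σ) :
    powPoint p (-n) i * powPoint p n i = 1 := by
  simp [powPoint]

theorem eval_powPoint_rescale (p : σ → Rˣ) (m n : ℤ) (f : MvPolynomial σ R) :
    eval (powPoint p m) (rescale (powPoint p n) f) = eval (powPoint p (m + n)) f := by
  rw [eval_rescale, powPoint_add, mul_comm]

theorem rescale_powPoint_rescale (p : σ → Rˣ) (m n : ℤ) (f : MvPolynomial σ R) :
    rescale (powPoint p m) (rescale (powPoint p n) f) = rescale (powPoint p (m + n)) f := by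
  rw [rescale_rescale, powPoint_add, mul_comm]

theorem rescale_powPoint_injective (p : σ → Rˣ) (n : ℤ) :
    Function.Injective (rescale (powPoint p n)) :=
  Function.LeftInverse.injective (g := rescale (powPoint p (-n))) fun f ↦ by
    rw [rescale_powPoint_rescale, neg_add_cancel, powPoint_zero, rescale_one, AlgHom.id_apply]

theorem IsMulIndependent.eq_zero_of_eval_powPoint_eq_zero [IsDomain R] {p : σ → Rˣ}
    (hp : IsMulIndependent p) {f : MvPolynomial σ R} (hf : ∀ n : ℕ, eval (powPoint p n) f = 0) :
    f = 0 := by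
  have hχ : Function.Injective fun s : σ →₀ ℕ ↦
      powersHom R ((s.prod fun i e ↦ p i ^ e : Rˣ) : R) :=
    (powersHom R).injective.comp (Units.val_injective.comp hp)
  have hli := (linearIndependent_monoidHom (Multiplicative ℕ) R).comp _ hχ
  have hc := linearIndependent_iff'.1 hli f.support (fun s ↦ coeff s f) <| by
    ext n
    rw [Finset.sum_apply, Pi.zero_apply, ← hf n.toAdd, eval_eq]
    refine Finset.sum_congr rfl fun s _ ↦ ?_
    simp [powPoint, Finsupp.prod, ← Finset.prod_pow, ← pow_mul, mul_comm]
  exact support_eq_empty.1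
    (Finset.eq_empty_of_forall_notMem fun s hs ↦ mem_support_iff.1 hs (hc s hs))

variable (R) in
/-- The functional extracting the coefficient of `T ^ z`. -/
def laurentCoeff (z : ℤ) : R[T;T⁻¹] →ₗ[R] R := (AddMonoidAlgebra.basis ℤ R).coord z

@[simp]
theorem laurentCoeff_apply (z : ℤ) (w : R[T;T⁻¹]) : laurentCoeff R z w = w.coeff z := rfl

theorem linearMap_ext_T {M : Type*} [AddCommGroup M] [Module R M] {f g : R[T;T⁻¹] →ₗ[R] M}
    (h : ∀ n, f (T n) = g (T n)) : f = g :=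
  (AddMonoidAlgebra.basis ℤ R).ext fun n ↦ h n

/-- The difference operator `T ^ m ↦ f(p ^ m) T ^ (m - n)` with symbol `f`. -/
def diffOp (p : σ → Rˣ) (n : ℤ) : MvPolynomial σ R →ₗ[R] Module.End R R[T;T⁻¹] :=
  ((AddMonoidAlgebra.basis ℤ R).constr R).toLinearMap ∘ₗ LinearMap.pi fun m ↦
    LinearMap.toSpanSingleton R R[T;T⁻¹] (T (m - n)) ∘ₗ (aeval (powPoint p m)).toLinearMap

variable (p : σ → Rˣ)

@[simp]
theorem diffOp_T (n : ℤ) (f : MvPolynomial σ R) (m : ℤ) :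
    diffOp p n f (T m) = eval (powPoint p m) f • T (m - n) :=
  (AddMonoidAlgebra.basis ℤ R).constr_basis R _ m

theorem coeff_diffOp (n : ℤ) (f : MvPolynomial σ R) (w : R[T;T⁻¹]) (z : ℤ) :
    (diffOp p n f w).coeff z = eval (powPoint p (z + n)) f * w.coeff (z + n) := by
  have : laurentCoeff R z ∘ₗ diffOp p n f =
      eval (powPoint p (z + n)) f • laurentCoeff R (z + n) := by
    refine linearMap_ext_T fun m ↦ ?_
    simp only [LinearMap.comp_apply, diffOp_T, map_smul, laurentCoeff_apply, T_apply,
      LinearMap.smul_apply, smul_eq_mul, sub_eq_iff_eq_add]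
    split_ifs with h <;> simp [h]
  exact LinearMap.congr_fun this w

theorem diffOp_mul_diffOp (a b : ℤ) (g f : MvPolynomial σ R) :
    diffOp p a g * diffOp p b f = diffOp p (a + b) (f * rescale (powPoint p (-b)) g) := by
  refine linearMap_ext_T fun m ↦ ?_
  rw [Module.End.mul_apply, diffOp_T, map_smul, diffOp_T, diffOp_T, smul_smul, map_mul,
    eval_powPoint_rescale, sub_sub, add_comm b, sub_eq_add_neg m b]

theorem diffOp_zero_C (a : R) : diffOp p 0 (C a) = algebraMap R _ a :=
  linearMap_ext_T fun m ↦ by simp [Module.algebraMap_end_apply]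

/-- The operator `∑ n, diffOp p n (F n)` with symbol `F`. -/
def ofSymbol : (ℤ →₀ MvPolynomial σ R) →ₗ[R] Module.End R R[T;T⁻¹] :=
  Finsupp.lsum R (diffOp p)

@[simp]
theorem ofSymbol_single (n : ℤ) (f : MvPolynomial σ R) :
    ofSymbol p (Finsupp.single n f) = diffOp p n f :=
  Finsupp.lsum_single ..

theorem coeff_ofSymbol_T (F : ℤ →₀ MvPolynomial σ R) (m z : ℤ) :
    (ofSymbol p F (T m)).coeff z = eval (powPoint p m) (F (m - z)) := by
  induction F using Finsupp.induction_linear with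
  | zero => simp
  | add F G hF hG => simp [hF, hG]
  | single n f =>
    rw [ofSymbol_single, diffOp_T, AddMonoidAlgebra.coeff_smul_apply, T_apply, Finsupp.single_apply]
    by_cases h : n = m - z
    · rw [if_pos h, if_pos (by omega), smul_eq_mul, mul_one]
    · rw [if_neg h, if_neg (by omega), smul_zero, map_zero]

theorem IsMulIndependent.ofSymbol_injective [IsDomain R] {p : σ → Rˣ} (hp : IsMulIndependent p) :
    Function.Injective (ofSymbol p) := by
  refine (injective_iff_map_eq_zero _).2 fun F hF ↦ Finsupp.ext fun n ↦
    hp.eq_zero_of_eval_powPoint_eq_zero fun m ↦ ?_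
  have := coeff_ofSymbol_T p F m (m - n)
  rw [hF, sub_sub_cancel] at this
  exact this.symm

/-- The symbol of `diffOp p a g * ofSymbol p F`. -/
def leftMulSymbol (a : ℤ) (g : MvPolynomial σ R) :
    (ℤ →₀ MvPolynomial σ R) →ₗ[R] (ℤ →₀ MvPolynomial σ R) :=
  Finsupp.lsum R fun b ↦
    Finsupp.lsingle (a + b) ∘ₗ LinearMap.mulRight R (rescale (powPoint p (-b)) g)

@[simp]
theorem leftMulSymbol_single (a : ℤ) (g : MvPolynomial σ R) (b : ℤ) (f : MvPolynomial σ R) :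
    leftMulSymbol p a g (Finsupp.single b f) =
      Finsupp.single (a + b) (f * rescale (powPoint p (-b)) g) :=
  Finsupp.lsum_single ..

theorem leftMulSymbol_apply (a : ℤ) (g : MvPolynomial σ R) (F : ℤ →₀ MvPolynomial σ R) (n : ℤ) :
    leftMulSymbol p a g F n = F (n - a) * rescale (powPoint p (a - n)) g := by
  induction F using Finsupp.induction_linear with
  | zero => simp
  | add F G hF hG => simp [hF, hG, add_mul]
  | single b f =>
    rw [leftMulSymbol_single, Finsupp.single_apply, Finsupp.single_apply]
    obtain rfl | h := eq_or_ne b (n - a)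
    · simp
    · rw [if_neg h, if_neg (by omega), zero_mul]

theorem diffOp_mul_ofSymbol (a : ℤ) (g : MvPolynomial σ R) (F : ℤ →₀ MvPolynomial σ R) :
    diffOp p a g * ofSymbol p F = ofSymbol p (leftMulSymbol p a g F) := by
  induction F using Finsupp.induction_linear with
  | zero => simp
  | add F G hF hG => simp [mul_add, hF, hG]
  | single b f => rw [ofSymbol_single, diffOp_mul_diffOp, leftMulSymbol_single, ofSymbol_single]

variable (σ R) in
/-- The symbols `F` such that `F n` has degree at most `n`. -/
def boundedSymbols : Submodule R (ℤ →₀ MvPolynomial σ R) where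
  carrier := {F | ∀ n, F n ∈ degreeLE σ R n}
  add_mem' hF hG n := add_mem (hF n) (hG n)
  zero_mem' _ := zero_mem _
  smul_mem' a _ hF n := Submodule.smul_mem _ a (hF n)

variable {p}

theorem leftMulSymbol_mem_boundedSymbols {a : ℤ} {g : MvPolynomial σ R} (hg : g ∈ degreeLE σ R a)
    {F : ℤ →₀ MvPolynomial σ R} (hF : F ∈ boundedSymbols σ R) :
    leftMulSymbol p a g F ∈ boundedSymbols σ R := fun n ↦ by
  rw [leftMulSymbol_apply]
  simpa using mul_mem_degreeLE (hF (n - a)) (rescale_mem_degreeLE _ hg)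

theorem single_mem_boundedSymbols {n : ℤ} {f : MvPolynomial σ R} (hf : f ∈ degreeLE σ R n) :
    Finsupp.single n f ∈ boundedSymbols σ R := fun m ↦ by
  classical
  rw [Finsupp.single_apply]
  split_ifs with h
  · exact h ▸ hf
  · exact zero_mem _

theorem diffOp_mem_map_boundedSymbols {n : ℤ} {f : MvPolynomial σ R} (hf : f ∈ degreeLE σ R n) :
    diffOp p n f ∈ (boundedSymbols σ R).map (ofSymbol p) :=
  ⟨_, single_mem_boundedSymbols hf, ofSymbol_single p n f⟩

variable (p) in
/-- The algebra of the operators whose symbol `F` is such that `F n` has degree at most `n`. -/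
def symbolAlgebra : Subalgebra R (Module.End R R[T;T⁻¹]) :=
  ((boundedSymbols σ R).map (ofSymbol p)).toSubalgebra
    (by
      rw [← map_one (algebraMap R _), ← diffOp_zero_C p]
      exact diffOp_mem_map_boundedSymbols (C_mem_degreeLE 1))
    (by
      rintro _ _ ⟨F, hF, rfl⟩ ⟨G, hG, rfl⟩
      rw [ofSymbol, Finsupp.lsum_apply, Finsupp.sum, Finset.sum_mul]
      refine sum_mem fun n _ ↦ ?_
      rw [← ofSymbol, diffOp_mul_ofSymbol]
      exact Submodule.mem_map_of_mem (leftMulSymbol_mem_boundedSymbols (hF n) hG))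

theorem mem_symbolAlgebra {s : Module.End R R[T;T⁻¹]} :
    s ∈ symbolAlgebra p ↔ ∃ F ∈ boundedSymbols σ R, ofSymbol p F = s := Iff.rfl

theorem diffOp_mem_symbolAlgebra {n : ℤ} {f : MvPolynomial σ R} (hf : f ∈ degreeLE σ R n) :
    diffOp p n f ∈ symbolAlgebra p :=
  diffOp_mem_map_boundedSymbols hf

variable (p)

/-- The linear map sending a symbol `F` to `∑ n, (∂ F n / ∂ X o)(1) T ^ (-n)`. -/
def derivSymbol (o : σ) : (ℤ →₀ MvPolynomial σ R) →ₗ[R] R[T;T⁻¹] :=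
  Finsupp.lsum R fun n ↦ LinearMap.toSpanSingleton R R[T;T⁻¹] (T (-n)) ∘ₗ
    (aeval (1 : σ → R)).toLinearMap ∘ₗ (pderiv o).toLinearMap

@[simp]
theorem derivSymbol_single (o : σ) (n : ℤ) (f : MvPolynomial σ R) :
    derivSymbol o (Finsupp.single n f) = eval 1 (pderiv o f) • T (-n) :=
  Finsupp.lsum_single ..

theorem coeff_derivSymbol (o : σ) (F : ℤ →₀ MvPolynomial σ R) (z : ℤ) :
    (derivSymbol o F).coeff z = eval 1 (pderiv o (F (-z))) := by
  induction F using Finsupp.induction_linear with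
  | zero => simp
  | add F G hF hG => simp [hF, hG]
  | single n f =>
    rw [derivSymbol_single, AddMonoidAlgebra.coeff_smul_apply, T_apply, Finsupp.single_apply]
    by_cases h : n = -z
    · rw [if_pos h, if_pos (by omega), smul_eq_mul, mul_one]
    · rw [if_neg h, if_neg (by omega), smul_zero, map_zero, map_zero]

theorem derivSymbol_leftMulSymbol (o : σ) (a : ℤ) (g : MvPolynomial σ R)
    {F : ℤ →₀ MvPolynomial σ R} (hF : ∀ n, eval 1 (F n) = 0) :
    derivSymbol o (leftMulSymbol p a g F) = diffOp p a g (derivSymbol o F) := by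
  ext z
  rw [coeff_derivSymbol, coeff_diffOp, coeff_derivSymbol, leftMulSymbol_apply, Derivation.leibniz,
    map_add, smul_eq_mul, smul_eq_mul, map_mul, map_mul, hF, zero_mul, zero_add,
    ← powPoint_zero p, eval_powPoint_rescale]
  congr 3 <;> ring_nf

end Operators

section PolynomialSubspace

open LaurentPolynomial (T T_apply)
open scoped LaurentPolynomial

variable (R : Type*) [CommRing R]

/-- The polynomials among the Laurent polynomials. -/
def polySpace : Submodule R R[T;T⁻¹] := Submodule.span R (Set.range fun n : ℕ ↦ T n)

/-- The algebra of the operators preserving the polynomials. -/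
def polyStabilizer : Subalgebra R (Module.End R R[T;T⁻¹]) where
  carrier := {s | ∀ w ∈ polySpace R, s w ∈ polySpace R}
  mul_mem' hs ht _ hw := hs _ (ht _ hw)
  add_mem' hs ht _ hw := add_mem (hs _ hw) (ht _ hw)
  algebraMap_mem' r _ hw := Submodule.smul_mem _ r hw

variable {R}

theorem mem_polySpace {w : R[T;T⁻¹]} : w ∈ polySpace R ↔ ∀ z < 0, w.coeff z = 0 := by
  let b := AddMonoidAlgebra.basis ℤ R
  have h : Set.range (fun n : ℕ ↦ (T n : R[T;T⁻¹])) = b '' Set.range ((↑) : ℕ → ℤ) :=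
    Set.range_comp b _
  rw [polySpace, h, b.mem_span_image, Nat.range_cast_int]
  exact forall_congr' fun z ↦ ⟨fun hz h0 ↦ by_contra fun hne ↦
    h0.not_ge (hz (Finsupp.mem_support_iff.2 hne)), fun hz hne ↦
    not_lt.1 fun h0 ↦ Finsupp.mem_support_iff.1 hne (hz h0)⟩

theorem T_mem_polySpace {n : ℤ} (hn : 0 ≤ n) : (T n : R[T;T⁻¹]) ∈ polySpace R := by
  lift n to ℕ using hn
  exact Submodule.subset_span ⟨n, rfl⟩

theorem mem_polyStabilizer {s : Module.End R R[T;T⁻¹]} :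
    s ∈ polyStabilizer R ↔ ∀ j : ℕ, s (T j) ∈ polySpace R :=
  (Submodule.span_le (p := (polySpace R).comap s)).trans Set.forall_mem_range

end PolynomialSubspace

section EulerianAlgebra

open LaurentPolynomial (T T_apply)
open scoped LaurentPolynomial
open MvPolynomial

variable {σ k : Type*} [Field k] (p : σ → kˣ)

/-- The symbol of the Eulerian derivative with parameter `p i`. -/
def eulerPoly (i : σ) : MvPolynomial σ k := ((p i : k) - 1)⁻¹ • (X i - C 1)

/-- The Eulerian derivative with parameter `p i`. -/
def euler (i : σ) : Module.End k k[T;T⁻¹] := diffOp p 1 (eulerPoly p i)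

/-- The algebra generated by the Eulerian derivatives with parameters `p i`. -/
abbrev eulerAlg : Subalgebra k (Module.End k k[T;T⁻¹]) := Algebra.adjoin k (Set.range (euler p))

theorem eulerPoly_mem_degreeLE (i : σ) : eulerPoly p i ∈ degreeLE σ k 1 :=
  Submodule.smul_mem _ _ (X_sub_C_mem_degreeLE i 1)

theorem eval_eulerPoly (x : σ → k) (i : σ) :
    eval x (eulerPoly p i) = ((p i : k) - 1)⁻¹ * (x i - 1) := by
  simp [eulerPoly]

theorem rescale_eulerPoly (n : ℤ) (i : σ) : rescale (powPoint p n) (eulerPoly p i) =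
    (((p i : k) - 1)⁻¹ * powPoint p n i) • (X i - C (powPoint p (-n) i)) := by
  have h : C (powPoint p n i) * C (powPoint p (-n) i) = (1 : MvPolynomial σ k) := by
    rw [← C_mul, mul_comm, powPoint_neg_mul, C_1]
  rw [eulerPoly, map_smul, map_sub, rescale_X, rescale_C, mul_smul,
    smul_eq_C_mul _ (powPoint p n i), mul_sub, h, C_1]

theorem coeff_euler (i : σ) (w : k[T;T⁻¹]) (z : ℤ) : (euler p i w).coeff z =
    ((p i : k) - 1)⁻¹ * (powPoint p (z + 1) i - 1) * w.coeff (z + 1) := by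
  rw [euler, coeff_diffOp, eval_eulerPoly]

theorem eq_euler {D : σ → Module.End k k[T;T⁻¹]}
    (hD : ∀ i, ∀ n : ℤ, D i (T n) = (((p i : k) ^ n - 1) / ((p i : k) - 1)) • T (n - 1)) :
    D = euler p :=
  funext fun i ↦ linearMap_ext_T fun n ↦ by
    rw [hD, euler, diffOp_T, eval_eulerPoly, powPoint, Units.val_zpow_eq_zpow_val, div_eq_inv_mul]

theorem euler_mem_eulerAlg (i : σ) : euler p i ∈ eulerAlg p := Algebra.subset_adjoin ⟨i, rfl⟩

theorem euler_mul_diffOp (i : σ) (n : ℤ) (f : MvPolynomial σ k) : euler p i * diffOp p n f =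
    (((p i : k) - 1)⁻¹ * powPoint p (-n) i) •
      diffOp p (n + 1) (f * (X i - C (powPoint p n i))) := by
  rw [euler, diffOp_mul_diffOp, rescale_eulerPoly, mul_smul_comm, map_smul, add_comm, neg_neg]

theorem euler_mem_polyStabilizer (i : σ) : euler p i ∈ polyStabilizer k := fun w hw ↦
  mem_polySpace.2 fun z hz ↦ by
    rw [coeff_euler]
    obtain h | h := (show z + 1 ≤ 0 by omega).lt_or_eq
    · rw [mem_polySpace.1 hw _ h, mul_zero]
    · rw [h, powPoint_zero, Pi.one_apply, sub_self, mul_zero, zero_mul]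

theorem eulerAlg_le : eulerAlg p ≤ symbolAlgebra p ⊓ polyStabilizer k := by
  refine Algebra.adjoin_le ?_
  rintro _ ⟨i, rfl⟩
  exact ⟨diffOp_mem_symbolAlgebra (eulerPoly_mem_degreeLE p i), euler_mem_polyStabilizer p i⟩

namespace IsMulIndependent

variable {p} (hp : IsMulIndependent p)
include hp

theorem powPoint_injective (i : σ) : Function.Injective fun n ↦ powPoint p n i :=
  Units.val_injective.comp (hp.zpow_injective i)

theorem sub_one_ne_zero (i : σ) : (p i : k) - 1 ≠ 0 :=
  sub_ne_zero.2 (by simpa [powPoint] using (hp.powPoint_injective i).ne one_ne_zero)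

theorem inv_sub_one_mul_powPoint_ne_zero (i : σ) (n : ℤ) :
    ((p i : k) - 1)⁻¹ * powPoint p n i ≠ 0 :=
  mul_ne_zero (inv_ne_zero (hp.sub_one_ne_zero i)) (Units.ne_zero _)

theorem diffOp_succ_mem_eulerAlg {n : ℤ} {i : σ} {f : MvPolynomial σ k}
    (hf : diffOp p n f ∈ eulerAlg p) :
    diffOp p (n + 1) (f * (X i - C (powPoint p n i))) ∈ eulerAlg p := by
  have h := mul_mem (euler_mem_eulerAlg p i) hf
  rwa [euler_mul_diffOp, ← Subalgebra.mem_toSubmodule,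
    Submodule.smul_mem_iff _ (hp.inv_sub_one_mul_powPoint_ne_zero i (-n))] at h

theorem vanishingDegreeLE_le_comap_diffOp [Nonempty σ] (n : ℕ) :
    vanishingDegreeLE ((fun m : ℕ ↦ powPoint p m) '' Finset.range n) n ≤
      (eulerAlg p).toSubmodule.comap (diffOp p n) := by
  obtain ⟨o⟩ := ‹Nonempty σ›
  have hinj : Function.Injective fun m : ℕ ↦ powPoint p m o :=
    (hp.powPoint_injective o).comp Nat.cast_injective
  induction n with
  | zero =>
    intro f hf
    rw [mem_degreeLE_zero.1 hf.1, Submodule.mem_comap, Nat.cast_zero, diffOp_zero_C]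
    exact Subalgebra.algebraMap_mem _ _
  | succ n ih =>
    rw [Finset.range_add_one, Finset.coe_insert, Set.image_insert_eq, Nat.cast_succ]
    refine (vanishingDegreeLE_insert_le (o := o) hinj.injOn
      (fun m hm ↦ hinj.ne (Finset.mem_range.1 hm).ne) (by simp)).trans ?_
    exact mulXSubC_le_iff.2 fun i f hf ↦ hp.diffOp_succ_mem_eulerAlg (ih hf)

theorem diffOp_mem_eulerAlg [Nonempty σ] {n : ℕ} {f : MvPolynomial σ k} (hf : f ∈ degreeLE σ k n)
    (h0 : ∀ m < n, eval (powPoint p m) f = 0) : diffOp p n f ∈ eulerAlg p :=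
  hp.vanishingDegreeLE_le_comap_diffOp n (mem_vanishingDegreeLE.2 ⟨hf, Set.forall_mem_image.2
    fun m hm ↦ h0 m (Finset.mem_range.1 hm)⟩)

theorem eulerAlg_eq [Nonempty σ] : eulerAlg p = symbolAlgebra p ⊓ polyStabilizer k := by
  refine (eulerAlg_le p).antisymm fun s hs ↦ ?_
  obtain ⟨⟨F, hF, rfl⟩, hs⟩ := hs
  rw [ofSymbol, Finsupp.lsum_apply]
  refine sum_mem fun n _ ↦ ?_
  obtain hn | hn := lt_or_ge n 0
  · have : F n = 0 := by simpa [degreeLE_eq_bot_of_neg hn] using hF n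
    simp [this]
  lift n to ℕ using hn
  refine hp.diffOp_mem_eulerAlg (hF n) fun m hm ↦ ?_
  have := mem_polySpace.1 (mem_polyStabilizer.1 hs m) (m - n) (by omega)
  rwa [coeff_ofSymbol_T, sub_sub_cancel] at this

theorem mem_polySpace_of_euler (i : σ) {w : k[T;T⁻¹]} (h : euler p i w ∈ polySpace k) :
    w ∈ polySpace k := mem_polySpace.2 fun z hz ↦ by
  have := mem_polySpace.1 h (z - 1) (by omega)
  rw [coeff_euler, sub_add_cancel] at this
  refine (mul_eq_zero.1 this).resolve_left
    (mul_ne_zero (inv_ne_zero (hp.sub_one_ne_zero i)) (sub_ne_zero.2 ?_))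
  simpa [powPoint_zero] using (hp.powPoint_injective i).ne hz.ne

theorem rescale_eulerPoly_ne_zero (n : ℤ) (i : σ) :
    rescale (powPoint p n) (eulerPoly p i) ≠ 0 := by
  rw [rescale_eulerPoly]
  exact smul_ne_zero (hp.inv_sub_one_mul_powPoint_ne_zero i n) (X_sub_C_ne_zero i _)

theorem exists_forall_eq_mul_rescale_eulerPoly [Nontrivial σ] (n : ℤ) {f : σ → MvPolynomial σ k}
    (h : ∀ i j, f i * rescale (powPoint p n) (eulerPoly p j) =
      f j * rescale (powPoint p n) (eulerPoly p i)) :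
    ∃ g, ∀ i, f i = g * rescale (powPoint p n) (eulerPoly p i) := by
  let u (i : σ) : k := ((p i : k) - 1)⁻¹ * powPoint p n i
  have hu (i : σ) : u i ≠ 0 := hp.inv_sub_one_mul_powPoint_ne_zero i n
  have hresc (i : σ) : rescale (powPoint p n) (eulerPoly p i) =
      u i • (X i - C (powPoint p (-n) i)) := rescale_eulerPoly p n i
  obtain ⟨g, hg⟩ := exists_forall_eq_mul_X_sub_C (f := fun i ↦ (u i)⁻¹ • f i)
    (c := powPoint p (-n)) fun i j ↦ by
      have hij := h i j
      rw [hresc, hresc, mul_smul_comm, mul_smul_comm] at hij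
      rw [smul_mul_assoc, smul_mul_assoc, inv_smul_eq_iff₀ (hu i), smul_comm,
        ← hij, inv_smul_smul₀ (hu j)]
  exact ⟨g, fun i ↦ by rw [hresc, mul_smul_comm, ← hg, smul_inv_smul₀ (hu i)]⟩

theorem exists_forall_eq_leftMulSymbol [Nontrivial σ] {F : σ → ℤ →₀ MvPolynomial σ k}
    (h : ∀ i j n, F i n * rescale (powPoint p (1 - n)) (eulerPoly p j) =
      F j n * rescale (powPoint p (1 - n)) (eulerPoly p i)) :
    ∃ G, ∀ i, F i = leftMulSymbol p 1 (eulerPoly p i) G := by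
  obtain ⟨o⟩ := (inferInstance : Nonempty σ)
  choose g hg using fun n ↦ hp.exists_forall_eq_mul_rescale_eulerPoly (1 - n) fun i j ↦ h i j n
  have hsupp : (Function.support fun n ↦ g (n + 1)).Finite := by
    refine ((F o).hasFiniteSupport.preimage (add_left_injective 1).injOn).subset fun n hn ↦ ?_
    rw [Set.mem_preimage, Function.mem_support, hg]
    exact mul_ne_zero hn (hp.rescale_eulerPoly_ne_zero _ o)
  refine ⟨Finsupp.ofSupportFinite _ hsupp, fun i ↦ Finsupp.ext fun n ↦ ?_⟩
  rw [leftMulSymbol_apply, Finsupp.ofSupportFinite_coe, sub_add_cancel, hg]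

theorem mem_boundedSymbols_of_leftMulSymbol (i : σ) {G : ℤ →₀ MvPolynomial σ k}
    (hG : leftMulSymbol p 1 (eulerPoly p i) G ∈ boundedSymbols σ k) : G ∈ boundedSymbols σ k := by
  intro n
  have h := hG (n + 1)
  rwa [leftMulSymbol_apply, add_sub_cancel_right, rescale_eulerPoly, mul_smul_comm,
    Submodule.smul_mem_iff _ (hp.inv_sub_one_mul_powPoint_ne_zero i _),
    mul_X_sub_C_mem_degreeLE_iff, add_sub_cancel_right] at h

end IsMulIndependent

/-- For a suitable polynomial `β`, these operators satisfy the relations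
`eulerSyzygy p β i * euler p j = eulerSyzygy p β j * euler p i` inside the Eulerian algebra. -/
def eulerSyzygy (β : MvPolynomial σ k) (i : σ) : Module.End k k[T;T⁻¹] :=
  diffOp p 2 (rescale (powPoint p 1) (eulerPoly p i) * β)

theorem eulerSyzygy_mul_euler_comm (β : MvPolynomial σ k) (i j : σ) :
    eulerSyzygy p β i * euler p j = eulerSyzygy p β j * euler p i := by
  rw [eulerSyzygy, eulerSyzygy, euler, euler, diffOp_mul_diffOp, diffOp_mul_diffOp,
    map_mul (rescale _), map_mul (rescale _),
    rescale_powPoint_rescale, rescale_powPoint_rescale, neg_add_cancel, powPoint_zero, rescale_one,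
    AlgHom.id_apply, AlgHom.id_apply, mul_left_comm]

namespace IsMulIndependent

variable {p} (hp : IsMulIndependent p)
include hp

theorem eulerPoly_sub_ne_zero {i o : σ} (hi : i ≠ o) :
    eulerPoly p o - eulerPoly p i ≠ 0 := fun h ↦ by
  classical
  have := congrArg (eval (Pi.single o 1)) h
  rw [map_sub, eval_eulerPoly, eval_eulerPoly, Pi.single_eq_same, Pi.single_eq_of_ne hi] at this
  simp [hp.sub_one_ne_zero i] at this

theorem eulerSyzygy_mem_eulerAlg (i o j : σ) :
    eulerSyzygy p (eulerPoly p o - eulerPoly p i) j ∈ eulerAlg p := by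
  have : Nonempty σ := ⟨i⟩
  have hdeg := mul_mem_degreeLE (rescale_mem_degreeLE (powPoint p 1) (eulerPoly_mem_degreeLE p j))
    (sub_mem (eulerPoly_mem_degreeLE p o) (eulerPoly_mem_degreeLE p i))
  rw [one_add_one_eq_two] at hdeg
  refine hp.diffOp_mem_eulerAlg (n := 2) (by exact_mod_cast hdeg) fun m hm ↦ ?_
  have hi := hp.sub_one_ne_zero i
  have ho := hp.sub_one_ne_zero o
  rw [map_mul, map_sub, eval_eulerPoly, eval_eulerPoly]
  interval_cases m <;> simp [powPoint, hi, ho]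

theorem mul_rescale_eulerPoly_eq_of_eulerSyzygy {β : MvPolynomial σ k} (hβ : β ≠ 0) {i j : σ}
    {F G : ℤ →₀ MvPolynomial σ k}
    (h : eulerSyzygy p β i * ofSymbol p F = eulerSyzygy p β j * ofSymbol p G) (n : ℤ) :
    F n * rescale (powPoint p (1 - n)) (eulerPoly p i) =
      G n * rescale (powPoint p (1 - n)) (eulerPoly p j) := by
  rw [eulerSyzygy, eulerSyzygy, diffOp_mul_ofSymbol, diffOp_mul_ofSymbol] at h
  have h := DFunLike.congr_fun (hp.ofSymbol_injective h) (n + 2)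
  simp only [leftMulSymbol_apply, add_sub_cancel_right, map_mul, rescale_powPoint_rescale,
    ← mul_assoc, show 2 - (n + 2) + 1 = 1 - n by ring] at h
  exact mul_right_cancel₀ ((map_ne_zero_iff _ (rescale_powPoint_injective p _)).2 hβ) h

theorem exists_eq_euler_mul [Nontrivial σ] {s : σ → Module.End k k[T;T⁻¹]}
    (hs : ∀ i, s i ∈ symbolAlgebra p)
    (h : ∀ i j, ∀ a ∈ eulerAlg p, ∀ b ∈ eulerAlg p, a * euler p i = b * euler p j →
      a * s i = b * s j) :
    ∃ r ∈ symbolAlgebra p, ∀ i, s i = euler p i * r := by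
  choose F hF hFs using fun i ↦ mem_symbolAlgebra.1 (hs i)
  obtain rfl : (fun i ↦ ofSymbol p (F i)) = s := funext hFs
  have hcomm (i j : σ) (n : ℤ) : F i n * rescale (powPoint p (1 - n)) (eulerPoly p j) =
      F j n * rescale (powPoint p (1 - n)) (eulerPoly p i) := by
    obtain rfl | hij := eq_or_ne i j
    · rfl
    exact hp.mul_rescale_eulerPoly_eq_of_eulerSyzygy (hp.eulerPoly_sub_ne_zero hij)
      (h _ _ _ (hp.eulerSyzygy_mem_eulerAlg i j j) _ (hp.eulerSyzygy_mem_eulerAlg i j i)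
        (eulerSyzygy_mul_euler_comm p _ j i)) n
  obtain ⟨G, hG⟩ := hp.exists_forall_eq_leftMulSymbol hcomm
  obtain ⟨o⟩ := (inferInstance : Nonempty σ)
  exact ⟨ofSymbol p G, ⟨G, hp.mem_boundedSymbols_of_leftMulSymbol o (hG o ▸ hF o), rfl⟩,
    fun i ↦ by rw [euler, diffOp_mul_ofSymbol, ← hG]⟩

end IsMulIndependent

/-- The Eulerian derivatives generate this left ideal, which is two-sided. -/
def eulerIdeal : Ideal (eulerAlg p) :=
  Ideal.span {x | ∃ i, (x : Module.End k k[T;T⁻¹]) = euler p i}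

/-- The Eulerian derivative with parameter `p i`, as an element of the ideal. -/
def eulerGen (i : σ) : eulerIdeal p :=
  ⟨⟨euler p i, euler_mem_eulerAlg p i⟩, Ideal.subset_span ⟨i, rfl⟩⟩

theorem asIdeal_span_eq_eulerIdeal :
    TwoSidedIdeal.asIdeal (TwoSidedIdeal.span
      {x : eulerAlg p | ∃ i, (x : Module.End k k[T;T⁻¹]) = euler p i}) = eulerIdeal p := by
  refine asIdeal_span_eq_span_of_adjoin_eq_top (k := k) ?_
  have h : {x : eulerAlg p | ∃ i, (x : Module.End k k[T;T⁻¹]) = euler p i} =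
      (↑) ⁻¹' Set.range (euler p) := Set.ext fun x ↦ exists_congr fun i ↦ eq_comm
  rw [h]
  exact Algebra.adjoin_adjoin_coe_preimage

theorem eq_smul_of_forall_eulerGen {M : Type*} [AddCommGroup M] [Module (eulerAlg p) M]
    {f : eulerIdeal p →ₗ[eulerAlg p] M} {m : M}
    (h : ∀ i, f (eulerGen p i) = (eulerGen p i : eulerAlg p) • m) (x : eulerIdeal p) :
    f x = (x : eulerAlg p) • m := by
  let g := LinearMap.toSpanSingleton (eulerAlg p) M m ∘ₗ (eulerIdeal p).subtype
  suffices f = g from LinearMap.congr_fun this x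
  refine (Submodule.linearMap_eq_iff_of_eq_span f g (rfl : eulerIdeal p = Ideal.span _)).2 ?_
  rintro ⟨x, i, hx⟩
  obtain rfl : x = eulerGen p i := Subtype.ext hx
  exact h i

theorem apply_T_zero_of_mem_eulerIdeal {x : eulerAlg p} (hx : x ∈ eulerIdeal p) :
    x.1 (T 0) = 0 := by
  have hle : eulerIdeal p ≤
      LinearMap.ker (LinearMap.toSpanSingleton (eulerAlg p) k[T;T⁻¹] (T 0)) := by
    refine Ideal.span_le.2 ?_
    rintro ⟨_, _⟩ ⟨i, rfl⟩
    refine LinearMap.mem_ker.2 ?_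
    change euler p i (T 0) = 0
    rw [euler, diffOp_T, eval_eulerPoly, powPoint_zero, Pi.one_apply, sub_self, mul_zero, zero_smul]
  exact hle hx

/-- `symbolAlgebra` as a module over the Eulerian algebra. -/
def symbolModule : Submodule (eulerAlg p) (Module.End k k[T;T⁻¹]) where
  carrier := symbolAlgebra p
  add_mem' := add_mem
  zero_mem' := zero_mem _
  smul_mem' a _ hs := mul_mem (eulerAlg_le p a.2).1 hs

/-- `polySpace` as a module over the Eulerian algebra. -/
def polyModule : Submodule (eulerAlg p) k[T;T⁻¹] where
  carrier := polySpace k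
  add_mem' := add_mem
  zero_mem' := zero_mem _
  smul_mem' a w hw := (eulerAlg_le p a.2).2 w hw

/-- The inclusion of the Eulerian algebra into `symbolModule`. -/
def inclSymbol : eulerAlg p →ₗ[eulerAlg p] symbolModule p where
  toFun a := ⟨a.1, (eulerAlg_le p a.2).1⟩
  map_add' _ _ := rfl
  map_smul' _ _ := rfl

theorem inclSymbol_injective : Function.Injective (inclSymbol p) := fun _ _ h ↦
  Subtype.ext (congrArg (fun s : symbolModule p ↦ s.1) h)

variable {p} in
theorem finite_setOf_apply_T_notMem_polySpace {s : Module.End k k[T;T⁻¹]}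
    (hs : s ∈ symbolAlgebra p) : {j : ℕ | s (T j) ∉ polySpace k}.Finite := by
  obtain ⟨F, -, rfl⟩ := mem_symbolAlgebra.1 hs
  obtain ⟨N, hN⟩ := F.hasFiniteSupport.bddAbove
  refine (Set.finite_lt_nat N.toNat).subset fun j hj ↦ ?_
  rw [Set.mem_ofPred_eq]
  by_contra! hNj
  refine hj (mem_polySpace.2 fun z hz ↦ ?_)
  rw [coeff_ofSymbol_T]
  have : F (j - z) = 0 := by_contra fun h ↦ by
    have := hN h
    omega
  rw [this, map_zero]

/-- The map sending an operator `s` to the polar parts of the Laurent polynomials `s (T ^ j)`,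
where `j` is a natural number. -/
def polarParts : symbolModule p →ₗ[eulerAlg p] ℕ →₀ k[T;T⁻¹] ⧸ polyModule p where
  toFun s := Finsupp.ofSupportFinite (fun j ↦ (polyModule p).mkQ (s.1 (T j))) <|
    (finite_setOf_apply_T_notMem_polySpace s.2).subset fun _ hj h ↦
      hj ((Submodule.Quotient.mk_eq_zero _).2 h)
  map_add' _ _ := Finsupp.ext fun _ ↦ rfl
  map_smul' _ _ := Finsupp.ext fun _ ↦ rfl

theorem polarParts_apply (s : symbolModule p) (j : ℕ) :
    polarParts p s j = (polyModule p).mkQ (s.1 (T j)) := rfl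

theorem mkQ_polyModule_eq_zero_iff {w : k[T;T⁻¹]} :
    (polyModule p).mkQ w = 0 ↔ w ∈ polySpace k := Submodule.Quotient.mk_eq_zero _

theorem polarParts_eq_zero_iff {s : symbolModule p} :
    polarParts p s = 0 ↔ s.1 ∈ polyStabilizer k :=
  Finsupp.ext_iff.trans <|
    (forall_congr' fun j ↦ by
      rw [polarParts_apply, Finsupp.zero_apply, mkQ_polyModule_eq_zero_iff]).trans
    mem_polyStabilizer.symm

/-- The residue of a Laurent polynomial modulo polynomials. -/
def residue : (k[T;T⁻¹] ⧸ polyModule p) →ₗ[k] k :=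
  ((polyModule p).restrictScalars k).liftQ (laurentCoeff k (-1))
      (fun _ hw ↦ mem_polySpace.1 hw _ (by norm_num)) ∘ₗ
    (Submodule.Quotient.restrictScalarsEquiv k (polyModule p)).symm.toLinearMap

@[simp]
theorem residue_mkQ (w : k[T;T⁻¹]) : residue p ((polyModule p).mkQ w) = w.coeff (-1) := rfl

theorem residue_euler_smul (i : σ) (q : k[T;T⁻¹] ⧸ polyModule p) :
    residue p ((eulerGen p i : eulerAlg p) • q) = 0 := by
  obtain ⟨w, rfl⟩ := (polyModule p).mkQ_surjective q
  rw [← map_smul, residue_mkQ]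
  change (euler p i w).coeff (-1) = 0
  rw [coeff_euler, neg_add_cancel, powPoint_zero, Pi.one_apply, sub_self, mul_zero, zero_mul]

/-- The operation `derivSymbol` on the symbols of operators. Operators without a symbol are given
a value by the choice of a left inverse of `ofSymbol`. -/
def operatorDeriv (o : σ) : Module.End k k[T;T⁻¹] →ₗ[k] k[T;T⁻¹] :=
  derivSymbol o ∘ₗ (ofSymbol p).leftInverse

namespace IsMulIndependent

variable {p} (hp : IsMulIndependent p)
include hp

theorem operatorDeriv_ofSymbol (o : σ) (F : ℤ →₀ MvPolynomial σ k) :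
    operatorDeriv p o (ofSymbol p F) = derivSymbol o F :=
  congrArg (derivSymbol o)
    (LinearMap.leftInverse_apply_of_inj (LinearMap.ker_eq_bot.2 hp.ofSymbol_injective) F)

theorem operatorDeriv_euler (o : σ) :
    operatorDeriv p o (euler p o) = ((p o : k) - 1)⁻¹ • T (-1) := by
  rw [euler, ← ofSymbol_single, hp.operatorDeriv_ofSymbol, derivSymbol_single, eulerPoly]
  simp

theorem operatorDeriv_ofSymbol_mul (o : σ) (E : ℤ →₀ MvPolynomial σ k)
    {F : ℤ →₀ MvPolynomial σ k} (hF : ofSymbol p F (T 0) = 0) :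
    operatorDeriv p o (ofSymbol p E * ofSymbol p F) =
      ofSymbol p E (operatorDeriv p o (ofSymbol p F)) := by
  have hF' (n : ℤ) : eval 1 (F n) = 0 := by
    have := coeff_ofSymbol_T p F 0 (-n)
    rwa [hF, zero_sub, neg_neg, powPoint_zero, eq_comm] at this
  induction E using Finsupp.induction_linear with
  | zero => simp
  | add E E' h h' => rw [map_add, add_mul, map_add, h, h', LinearMap.add_apply]
  | single n g =>
    rw [ofSymbol_single, diffOp_mul_ofSymbol, hp.operatorDeriv_ofSymbol, hp.operatorDeriv_ofSymbol,
      derivSymbol_leftMulSymbol p o n g hF']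

/-- `operatorDeriv` on the ideal, where it is linear over the Eulerian algebra. -/
def idealDeriv (o : σ) : eulerIdeal p →ₗ[eulerAlg p] k[T;T⁻¹] where
  toFun x := operatorDeriv p o x.1.1
  map_add' x y := map_add (operatorDeriv p o) x.1.1 y.1.1
  map_smul' a x := by
    obtain ⟨E, -, hE⟩ := (eulerAlg_le p a.2).1
    obtain ⟨F, -, hF⟩ := (eulerAlg_le p x.1.2).1
    have hx := apply_T_zero_of_mem_eulerIdeal p x.2
    rw [← hF] at hx
    have := hp.operatorDeriv_ofSymbol_mul o E hx
    rwa [hE, hF] at this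

theorem exists_eq_smul_symbolModule [Nontrivial σ]
    (f : eulerIdeal p →ₗ[eulerAlg p] symbolModule p) :
    ∃ s : symbolModule p, ∀ x : eulerIdeal p, f x = (x : eulerAlg p) • s := by
  obtain ⟨r, hr, hfr⟩ := hp.exists_eq_euler_mul (s := fun i ↦ (f (eulerGen p i)).1)
    (fun i ↦ (f _).2) fun i j a ha b hb hab ↦ by
      have h : (⟨a, ha⟩ : eulerAlg p) • eulerGen p i = (⟨b, hb⟩ : eulerAlg p) • eulerGen p j :=
        Subtype.ext (Subtype.ext hab)
      have h := congrArg f h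
      rw [map_smul, map_smul] at h
      exact congrArg Subtype.val h
  exact ⟨⟨r, hr⟩, eq_smul_of_forall_eulerGen p fun i ↦ Subtype.ext (hfr i)⟩

theorem exists_eq_smul_eulerAlg [Nontrivial σ] (f : eulerIdeal p →ₗ[eulerAlg p] eulerAlg p) :
    ∃ a : eulerAlg p, ∀ x : eulerIdeal p, f x = (x : eulerAlg p) • a := by
  obtain ⟨s, hs⟩ := hp.exists_eq_smul_symbolModule (inclSymbol p ∘ₗ f)
  obtain ⟨o⟩ := (inferInstance : Nonempty σ)
  have hmem : s.1 ∈ eulerAlg p := by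
    refine hp.eulerAlg_eq.ge ⟨s.2, mem_polyStabilizer.2 fun j ↦ hp.mem_polySpace_of_euler o ?_⟩
    have h : (f (eulerGen p o)).1 = euler p o * s.1 := congrArg Subtype.val (hs (eulerGen p o))
    rw [← Module.End.mul_apply, ← h]
    exact mem_polyStabilizer.1 (eulerAlg_le p (f _).2).2 j
  refine ⟨⟨s.1, hmem⟩, fun x ↦ Subtype.ext ?_⟩
  have h : (f x).1 = (x : eulerAlg p).1 * s.1 := congrArg Subtype.val (hs x)
  exact h

theorem exact_inclSymbol_polarParts [Nonempty σ] :
    Function.Exact (inclSymbol p) (polarParts p) := fun s ↦ by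
  rw [polarParts_eq_zero_iff]
  constructor
  · exact fun h ↦ ⟨⟨s.1, hp.eulerAlg_eq.ge ⟨s.2, h⟩⟩, rfl⟩
  · rintro ⟨a, rfl⟩
    exact (eulerAlg_le p a.2).2

theorem single_mkQ_T_mem_range_polarParts [Nonempty σ] (j : ℕ) (n : ℤ) :
    Finsupp.single j ((polyModule p).mkQ (T n)) ∈ LinearMap.range (polarParts p) := by
  obtain hn | hn := le_or_gt 0 n
  · rw [(mkQ_polyModule_eq_zero_iff p).2 (T_mem_polySpace hn), Finsupp.single_zero]
    exact zero_mem _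
  obtain ⟨N, hN⟩ := Int.eq_ofNat_of_zero_le (show 0 ≤ j - n by omega)
  obtain ⟨o⟩ := ‹Nonempty σ›
  have hinj : Function.Injective fun m : ℕ ↦ powPoint p m o :=
    (hp.powPoint_injective o).comp Nat.cast_injective
  obtain ⟨f, hf, hev⟩ := exists_mem_degreeLE_eval_eq (v := fun m : ℕ ↦ powPoint p m)
    (s := Finset.range N) hinj.injOn (Pi.single j 1)
  refine ⟨⟨diffOp p N f, diffOp_mem_symbolAlgebra (degreeLE_mono (by simp) hf)⟩,
    Finsupp.ext fun m ↦ ?_⟩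
  rw [polarParts_apply, diffOp_T]
  obtain hm | hm := lt_or_ge m N
  · rw [hev m (Finset.mem_range.2 hm)]
    obtain rfl | hmj := eq_or_ne m j
    · rw [Pi.single_eq_same, one_smul, Finsupp.single_eq_same, ← hN, sub_sub_cancel]
    · rw [Pi.single_eq_of_ne hmj, zero_smul, map_zero, Finsupp.single_eq_of_ne hmj]
  · rw [Finsupp.single_eq_of_ne (by omega), mkQ_polyModule_eq_zero_iff]
    exact Submodule.smul_mem _ _ (T_mem_polySpace (by omega))

theorem polarParts_surjective [Nonempty σ] : Function.Surjective (polarParts p) := by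
  rw [← LinearMap.range_eq_top, Submodule.eq_top_iff']
  intro F
  induction F using Finsupp.induction_linear with
  | zero => exact zero_mem _
  | add F G hF hG => exact add_mem hF hG
  | single j q =>
    obtain ⟨w, rfl⟩ := (polyModule p).mkQ_surjective q
    let M : Submodule (eulerAlg p) k[T;T⁻¹] := (LinearMap.range (polarParts p)).comap
      (Finsupp.lsingle j ∘ₗ (polyModule p).mkQ)
    have hM : ⊤ ≤ M.restrictScalars k := by
      rw [← (AddMonoidAlgebra.basis ℤ k).span_eq]
      exact Submodule.span_le.2
        (Set.forall_mem_range.2 (hp.single_mkQ_T_mem_range_polarParts j))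
    exact hM (Submodule.mem_top (x := w))

theorem exists_residue_eq (o : σ) (v : ℕ →₀ k) :
    ∃ f : eulerIdeal p →ₗ[eulerAlg p] ℕ →₀ k[T;T⁻¹] ⧸ polyModule p,
      Finsupp.mapRange.linearMap (residue p) (f (eulerGen p o)) = v := by
  induction v using Finsupp.induction_linear with
  | zero => exact ⟨0, map_zero _⟩
  | add v w hv hw =>
    obtain ⟨f, rfl⟩ := hv
    obtain ⟨g, rfl⟩ := hw
    exact ⟨f + g, map_add _ _ _⟩
  | single j c =>
    refine ⟨(c * ((p o : k) - 1)) •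
      (Finsupp.lsingle j ∘ₗ (polyModule p).mkQ ∘ₗ hp.idealDeriv o), ?_⟩
    have hδ : hp.idealDeriv o (eulerGen p o) = ((p o : k) - 1)⁻¹ • T (-1) :=
      hp.operatorDeriv_euler o
    have hres : residue p ((polyModule p).mkQ (hp.idealDeriv o (eulerGen p o))) =
        ((p o : k) - 1)⁻¹ := by
      rw [hδ, residue_mkQ, AddMonoidAlgebra.coeff_smul, Finsupp.smul_apply, T_apply, if_pos rfl,
        smul_eq_mul, mul_one]
    rw [LinearMap.smul_apply, LinearMap.comp_apply, LinearMap.comp_apply, map_smul,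
      Finsupp.lsingle_apply, Finsupp.mapRange.linearMap_apply, Finsupp.mapRange_single, hres,
      Finsupp.smul_single, smul_eq_mul, mul_inv_cancel_right₀ (hp.sub_one_ne_zero o)]

end IsMulIndependent

end EulerianAlgebra

theorem stmt_19_general {k : Type u} [Field k] {σ : Type*} [Nontrivial σ] (p : σ → kˣ)
    (hp : IsMulIndependent p) (D : σ → Module.End k (LaurentPolynomial k))
    (hD : ∀ i, ∀ n : ℤ, D i (LaurentPolynomial.T n)
        = (((p i : k) ^ n - 1) / ((p i : k) - 1)) • LaurentPolynomial.T (n - 1))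
    (A : Subalgebra k (Module.End k (LaurentPolynomial k)))
    (hA : A = Algebra.adjoin k (Set.range D))
    (Aplus : Submodule A A)
    (hAplus : Aplus = TwoSidedIdeal.asIdeal (TwoSidedIdeal.span
      {x : A | ∃ i, (x : Module.End k (LaurentPolynomial k)) = D i})) :
    Subsingleton (((Ext k (ModuleCat.{u} A) 1).obj
        (Opposite.op (ModuleCat.of A (A ⧸ Aplus)))).obj (ModuleCat.of A A)) ∧
    ¬ Module.Finite k (((Ext k (ModuleCat.{u} A) 2).obj
        (Opposite.op (ModuleCat.of A (A ⧸ Aplus)))).obj (ModuleCat.of A A)) := by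
  obtain rfl := eq_euler p hD
  subst hA
  rw [asIdeal_span_eq_eulerIdeal] at hAplus
  subst hAplus
  refine ⟨?_, fun hExt ↦ ?_⟩
  · have := subsingleton_ext_one_of_forall_eq_smul hp.exists_eq_smul_eulerAlg
    exact (extSuccLinearEquiv k _ _ 0).toEquiv.subsingleton
  · obtain ⟨o⟩ := (inferInstance : Nonempty σ)
    have hfin : Module.Finite k (ℕ →₀ k) :=
      finite_of_finite_ext_two_quotient hp.exact_inclSymbol_polarParts (inclSymbol_injective p)
        hp.polarParts_surjective hp.exists_eq_smul_symbolModule (eulerGen p o)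
        (Finsupp.mapRange.linearMap (residue p)) (hp.exists_residue_eq o)
        (fun F ↦ Finsupp.ext fun j ↦ residue_euler_smul p o (F j))
        (Module.Finite.equiv (extSuccLinearEquiv k _ _ 1))
    have := Module.Finite.finite_basis (Finsupp.basisSingleOne (R := k) (ι := ℕ))
    exact not_finite ℕ

/-- let `A` be the algebra generated by `t ≥ 2` Eulerian derivatives with
parameters algebraically independent over the prime subfield, `A₊` the two-sided ideal
generated by the generators, and `𝕜 = A/A₊`.  Then `Ext¹_A(𝕜, A) = 0` while
`Ext²_A(𝕜, A)` is infinite-dimensional over `k`. -/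
theorem stmt_19 {k : Type u} [Field k] [IsAlgClosed k]
    (t : ℕ) (ht : 2 ≤ t) (p : Fin t → k)
    (hp : AlgebraicIndependent (⊥ : Subfield k) p)
    (D : Fin t → Module.End k (LaurentPolynomial k))
    (hD : ∀ i, ∀ n : ℤ, D i (LaurentPolynomial.T n)
        = ((p i ^ n - 1) / (p i - 1)) • LaurentPolynomial.T (n - 1))
    (A : Subalgebra k (Module.End k (LaurentPolynomial k)))
    (hA : A = Algebra.adjoin k (Set.range D))
    (Aplus : Submodule A A)
    (hAplus : Aplus = TwoSidedIdeal.asIdeal (TwoSidedIdeal.span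
      {x : A | ∃ i, (x : Module.End k (LaurentPolynomial k)) = D i})) :
    Subsingleton (((Ext k (ModuleCat.{u} A) 1).obj
        (Opposite.op (ModuleCat.of A (A ⧸ Aplus)))).obj (ModuleCat.of A A)) ∧
    ¬ Module.Finite k (((Ext k (ModuleCat.{u} A) 2).obj
        (Opposite.op (ModuleCat.of A (A ⧸ Aplus)))).obj (ModuleCat.of A A)) := by
  lift p to Fin t → kˣ using fun i ↦ (hp.ne_zero i).isUnit
  have : Nontrivial (Fin t) := Fin.nontrivial_iff_two_le.2 ht
  exact stmt_19_general p (.of_algebraicIndependent hp) D hD A hA Aplus hAplus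
end
end
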